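/- Let φ : D → D be an irrational pseudo-rotation. Then for every integer n ≥ 1, the linearization D(φⁿ)(0) of the n-th iterate of φ at the origin does not have 1 as an eigenvalue; in particular the fixed point 0 is non-degenerate for every iterate of φ. Moreover, Dφ(0) has no real eigenvalues at all. -/

import Mathlib

open Complex Metric Set

/-- The closed unit disk in `ℂ ≅ ℝ²`. -/
def Disk : Set ℂ := Metric.closedBall 0 1

/-- A `C^∞`-smooth diffeomorphism of the closed unit disk: a bijection of `Disk`
which is `C^∞` up to the boundary together with its inverse. -/
structure SmoothDiskDiffeo where
  toFun : ℂ → ℂ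
  invFun : ℂ → ℂ
  mapsTo : Set.MapsTo toFun Disk Disk
  mapsTo_inv : Set.MapsTo invFun Disk Disk
  left_inv : ∀ z ∈ Disk, invFun (toFun z) = z
  right_inv : ∀ z ∈ Disk, toFun (invFun z) = z
  smooth : ContDiffOn ℝ (⊤ : ℕ∞) toFun Disk
  smooth_inv : ContDiffOn ℝ (⊤ : ℕ∞) invFun Disk


/-- A nowhere vanishing continuous function on a contractible space has a continuous logarithm. -/
theorem exists_clog {X : Type*} [TopologicalSpace X] [ContractibleSpace X]
    [LocallyPathConnectedSpace X] (g : X → ℂ) (hg : Continuous g) (h0 : ∀ x, g x ≠ 0) :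
    ∃ L : X → ℂ, Continuous L ∧ ∀ x, Complex.exp (L x) = g x := by
  obtain ⟨x0⟩ : Nonempty X := inferInstance
  rcases Complex.isCoveringMapOn_exp.existsUnique_continuousMap_lifts
    (⟨g, hg⟩ : C(X, ℂ)) (a₀ := x0) (e₀ := Complex.log (g x0)) (Complex.exp_log (h0 x0))
    (fun x ↦ by simpa using h0 x) with ⟨f, ⟨-, hf⟩, -⟩
  exact ⟨f, f.continuous, fun x => congr_fun hf x⟩

/-- Two continuous logarithms differ by a constant on preconnected sets. -/
theorem clog_unique {X : Type*} [TopologicalSpace X] {S : Set X} (hS : IsPreconnected S)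
    {L₁ L₂ : X → ℂ} (h₁ : ContinuousOn L₁ S) (h₂ : ContinuousOn L₂ S)
    (h : ∀ x ∈ S, Complex.exp (L₁ x) = Complex.exp (L₂ x)) {a b : X} (ha : a ∈ S) (hb : b ∈ S) :
    L₁ a - L₂ a = L₁ b - L₂ b := by
  have key := Complex.isCoveringMap_exp.eqOn_of_comp_eqOn (s := S) (g₁ := L₁)
    (g₂ := fun x => L₂ x + (L₁ a - L₂ a)) hS h₁ (h₂.add continuousOn_const)
    (by
      intro x hx
      apply Subtype.ext
      have := h a ha
      simp only [Function.comp, Complex.exp_add, Complex.exp_sub, this, h x hx]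
      field_simp) ha (by simp)
  have := key hb
  simp only at this
  rw [this]; ring

/-- Branch of the logarithm on the closed upper half plane minus the origin. -/
noncomputable def lu (z : ℂ) : ℂ := Complex.log (-I * z) + I * (Real.pi / 2)

theorem exp_lu {z : ℂ} (hz : z ≠ 0) : Complex.exp (lu z) = z := by
  unfold lu
  rw [Complex.exp_add, Complex.exp_log (by simp [hz])]
  have : I * ((Real.pi : ℂ) / 2) = (Real.pi / 2 : ℂ) * I := by ring
  rw [this, Complex.exp_pi_div_two_mul_I]
  linear_combination -z * Complex.I_mul_I

theorem lu_slit {z : ℂ} (h0 : z ≠ 0) (hz : 0 ≤ z.im) : -I * z ∈ Complex.slitPlane := by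
  rw [Complex.mem_slitPlane_iff]
  rcases hz.lt_or_eq with h | h
  · left; simpa using h
  · right
    simp only [neg_mul, neg_im, mul_im, I_re, zero_mul, I_im, one_mul, zero_add]
    intro h1
    exact h0 (Complex.ext (by simpa using h1) (by simp [← h]))

theorem continuousOn_lu {X : Type*} [TopologicalSpace X] {S : Set X} {g : X → ℂ}
    (hg : ContinuousOn g S) (h0 : ∀ x ∈ S, g x ≠ 0) (hi : ∀ x ∈ S, 0 ≤ (g x).im) :
    ContinuousOn (fun x => lu (g x)) S := by
  unfold lu
  exact ((continuousOn_const.mul hg).clog (fun x hx => lu_slit (h0 x hx) (hi x hx))).add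
    continuousOn_const

theorem lu_pos {d : ℝ} (hd : 0 < d) : (lu d).im = 0 := by
  unfold lu
  have : -I * (d:ℂ) = (d : ℂ) * (-I) := by ring
  rw [this, Complex.add_im, Complex.log_im, Complex.arg_real_mul _ hd]
  simp [Complex.arg_neg_I]

theorem lu_neg {d : ℝ} (hd : d < 0) : (lu d).im = Real.pi := by
  unfold lu
  have : -I * (d:ℂ) = ((-d : ℝ) : ℂ) * I := by push_cast; ring
  rw [this, Complex.add_im, Complex.log_im, Complex.arg_real_mul _ (by linarith)]
  simp [Complex.arg_I]

/-- The umlaufsatz homotopy: for a simple arc `Γ` on `[0, T+1]` whose initial point is lowest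
and whose final point is highest, the turning of `Γ (s+1) - Γ s` is that in the upper half plane. -/
theorem turning (Γ : ℝ → ℂ) (T : ℝ) (hT : 0 ≤ T) (hc : ContinuousOn Γ (Icc 0 (T + 1)))
    (hinj : InjOn Γ (Icc 0 (T + 1)))
    (hlow : ∀ t ∈ Icc 0 (T + 1), (Γ 0).im ≤ (Γ t).im)
    (hhigh : ∀ t ∈ Icc 0 (T + 1), (Γ t).im ≤ (Γ (T + 1)).im)
    (ℓ : ℝ → ℂ) (hℓ : ContinuousOn ℓ (Icc 0 T))
    (hexp : ∀ s ∈ Icc 0 T, Complex.exp (ℓ s) = Γ (s + 1) - Γ s) :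
    ℓ T - lu (Γ (T + 1) - Γ T) = ℓ 0 - lu (Γ 1 - Γ 0) := by
  -- clamped homotopy
  let p : ℝ → ℝ := fun s => max 0 (min s T)
  let q : ℝ → ℝ := fun u => max 0 (min u 1)
  have hp : Continuous p := by fun_prop
  have hq : Continuous q := by fun_prop
  have hpm : ∀ s, p s ∈ Icc 0 T := fun s => ⟨le_max_left _ _, max_le hT (min_le_right _ _)⟩
  have hqm : ∀ u, q u ∈ Icc (0:ℝ) 1 := fun s => ⟨le_max_left _ _, max_le zero_le_one (min_le_right _ _)⟩
  have hpe : ∀ s ∈ Icc 0 T, p s = s := fun s hs => by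
    simp only [p]; rw [min_eq_left hs.2, max_eq_right hs.1]
  have hqe : ∀ s ∈ Icc (0:ℝ) 1, q s = s := fun s hs => by
    simp only [q]; rw [min_eq_left hs.2, max_eq_right hs.1]
  let t : ℝ × ℝ → ℝ := fun x => p x.1 + 1 + q x.2 * (T - p x.1)
  have ht : Continuous t := by fun_prop
  have htm : ∀ x, t x ∈ Icc 0 (T + 1) := by
    intro x
    have h1 := hpm x.1; have h2 := hqm x.2
    constructor
    · simp only [t]; nlinarith [h1.1, h1.2, h2.1, h2.2, mul_nonneg h2.1 (sub_nonneg.2 h1.2)]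
    · simp only [t]; nlinarith [h1.1, h1.2, h2.1, h2.2, mul_nonneg (sub_nonneg.2 h2.2) (sub_nonneg.2 h1.2)]
  have hlt : ∀ x, p x.1 < t x := by
    intro x
    have h1 := hpm x.1; have h2 := hqm x.2
    simp only [t]; nlinarith [mul_nonneg h2.1 (sub_nonneg.2 h1.2)]
  have hpm' : ∀ s, p s ∈ Icc 0 (T + 1) := fun s => ⟨(hpm s).1, (hpm s).2.trans (by linarith)⟩
  let M : ℝ × ℝ → ℂ := fun x => Γ (t x) - Γ (p x.1)
  have hM : Continuous M := by
    apply Continuous.sub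
    · exact hc.comp_continuous ht htm
    · exact hc.comp_continuous (hp.comp continuous_fst) (fun x => hpm' x.1)
  have hM0 : ∀ x, M x ≠ 0 := by
    intro x h
    have := hinj (htm x) (hpm' x.1) (sub_eq_zero.1 h)
    exact absurd this (hlt x).ne'
  obtain ⟨Λ, hΛ, hΛe⟩ := exists_clog M hM hM0
  have z0 : (0:ℝ) ∈ Icc (0:ℝ) 1 := ⟨le_refl _, zero_le_one⟩
  have z1 : (1:ℝ) ∈ Icc (0:ℝ) 1 := ⟨zero_le_one, le_refl _⟩
  have w0 : (0:ℝ) ∈ Icc (0:ℝ) T := ⟨le_refl _, hT⟩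
  have w1 : (T:ℝ) ∈ Icc (0:ℝ) T := ⟨hT, le_refl _⟩
  -- edge u = 0
  have e1 := clog_unique (S := Icc 0 T) isPreconnected_Icc (L₁ := fun s => Λ (s, 0)) (L₂ := ℓ)
    (by fun_prop) hℓ (fun s hs => by
      rw [hΛe, hexp s hs]; simp only [M, t, hpe s hs, hqe 0 z0]; simp) w0 w1
  -- edge s = 0
  have e2 := clog_unique (S := Icc (0:ℝ) 1) isPreconnected_Icc (L₁ := fun u => Λ (0, u))
    (L₂ := fun u => lu (M (0, u)))
    (by fun_prop) (continuousOn_lu (by fun_prop) (fun u _ => hM0 _) (fun u hu => by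
      simp only [M, hpe 0 w0, Complex.sub_im, sub_nonneg]; exact hlow _ (htm _)))
    (fun s hs => by rw [hΛe, exp_lu (hM0 _)]) z0 z1
  -- edge u = 1
  have e3 := clog_unique (S := Icc (0:ℝ) T) isPreconnected_Icc (L₁ := fun s => Λ (s, 1))
    (L₂ := fun s => lu (M (s, 1)))
    (by fun_prop) (continuousOn_lu (by fun_prop) (fun u _ => hM0 _) (fun s hs => by
      have : t (s, 1) = T + 1 := by simp only [t, hpe s hs, hqe 1 z1]; ring
      simp only [M, this, Complex.sub_im, sub_nonneg]; exact hhigh _ (hpm' _)))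
    (fun s hs => by rw [hΛe, exp_lu (hM0 _)]) w0 w1
  -- edge s = T
  have e4 := clog_unique (S := Icc (0:ℝ) 1) isPreconnected_Icc (L₁ := fun u => Λ (T, u))
    (L₂ := fun u => Λ (T, 0))
    (by fun_prop) (by fun_prop) (fun s hs => by
      rw [hΛe, hΛe]; simp [M, t, hpe T w1]) z0 z1
  have m1 : M (0, 0) = Γ 1 - Γ 0 := by simp [M, t, hpe 0 w0, hqe 0 z0]
  have m2 : M (T, 1) = Γ (T + 1) - Γ T := by simp [M, t, hpe T w1]
  simp only [m1, m2] at e1 e2 e3 e4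
  linear_combination e1 - e2 - e3 + e4


/-- Homeomorphism-like maps of the strip `0 ≤ im z ≤ 1`, extended to the plane. -/
structure StripMap (F : ℂ → ℂ) : Prop where
  cont : Continuous F
  inj : Function.Injective F
  per : ∀ z, F (z + (2 * Real.pi : ℝ)) = F z + (2 * Real.pi : ℝ)
  top : ∀ z : ℂ, 1 ≤ z.im → (F z).im = z.im
  bot : ∀ z : ℂ, z.im ≤ 0 → (F z).im = z.im
  mid : ∀ z : ℂ, 0 < z.im → z.im < 1 → 0 < (F z).im ∧ (F z).im < 1
  topre : ∀ z : ℂ, 1 ≤ z.im → (F z).re = (F (z.re + I)).re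
  botre : ∀ z : ℂ, z.im ≤ 0 → (F z).re = (F z.re).re

theorem StripMap.im_nonneg {F : ℂ → ℂ} (h : StripMap F) {z : ℂ} (hz : 0 ≤ z.im) :
    0 ≤ (F z).im := by
  rcases hz.eq_or_lt with h0 | h0
  · rw [h.bot z h0.symm.le]; exact hz
  · rcases le_or_gt 1 z.im with h1 | h1
    · rw [h.top z h1]; exact hz
    · exact (h.mid z h0 h1).1.le

theorem StripMap.im_lt_one {F : ℂ → ℂ} (h : StripMap F) {z : ℂ} (hz : z.im < 1) :
    (F z).im < 1 := by
  rcases le_or_gt z.im 0 with h0 | h0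
  · rw [h.bot z h0]; exact hz
  · exact (h.mid z h0 hz).2

theorem StripMap.surj_seg {F : ℂ → ℂ} (h : StripMap F) (s : ℝ) (hs : 0 ≤ s) (hs1 : s ≤ 1)
    (x' : ℝ) : ∃ x : ℝ, x + s * ((F x).re - x) = x' := by
  have hF := h.cont
  let d : ℝ → ℝ := fun x => (F x).re - x
  have hd : Continuous d := by fun_prop
  have hper : Function.Periodic d (2 * Real.pi) := by
    intro x
    have := h.per x
    simp only [d]
    rw [← Complex.ofReal_add] at this
    rw [this]
    simp
  obtain ⟨C, hC⟩ := (isCompact_Icc (a := (0:ℝ)) (b := 2 * Real.pi)).exists_bound_of_continuousOn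
    hd.continuousOn
  have hC' : ∀ x, |d x| ≤ C := by
    intro x
    obtain ⟨y, hy, hxy⟩ := hper.exists_mem_Ico₀ (by positivity) x
    rw [hxy]; exact hC y ⟨hy.1, hy.2.le⟩
  have hC0 : 0 ≤ C := (abs_nonneg _).trans (hC' 0)
  have hcont : Continuous (fun x : ℝ => x + s * d x) := by fun_prop
  refine mem_range_of_exists_le_of_exists_ge hcont ⟨x' - C, ?_⟩ ⟨x' + C, ?_⟩
  · have := (abs_le.1 (hC' (x' - C))).2
    nlinarith [mul_le_mul_of_nonneg_left this hs]
  · have := (abs_le.1 (hC' (x' + C))).1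
    nlinarith [mul_le_mul_of_nonneg_left this hs]

theorem half_turn {F : ℂ → ℂ} (h : StripMap F) (δ : ℝ) (hδ : 0 < δ)
    (hdisp : ∀ z, δ ≤ ‖F z - z‖)
    (hesc : ∀ ε : ℝ, 0 < ε → ε < 1 → ∃ (w : ℂ) (n : ℕ), 0 ≤ w.im ∧ w.im < ε ∧
      1 ≤ ((fun z => F z + ε * I)^[n] w).im)
    (L : ℂ → ℂ) (hL : Continuous L) (hLe : ∀ z, Complex.exp (L z) = F z - z) :
    ∀ a b : ℂ, a.im = 0 → 1 ≤ b.im → L b - lu (F b - b) = L a - lu (F a - a) := by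
  have hF := h.cont
  have hF0 : ∀ z, F z - z ≠ 0 := fun z => by rw [← hLe]; exact Complex.exp_ne_zero _
  -- constancy at bottom and top
  have cbot : ∀ a a' : ℂ, a.im = 0 → a'.im = 0 → L a - lu (F a - a) = L a' - lu (F a' - a') := by
    intro a a' ha ha'
    have hconv : Convex ℝ {z : ℂ | z.im = 0} := by
      exact convex_hyperplane (f := Complex.im) Complex.imLm.isLinear 0
    exact clog_unique (S := {z : ℂ | z.im = 0}) hconv.isPreconnected hL.continuousOn
      (continuousOn_lu (by fun_prop) (fun z _ => hF0 z) (fun z hz => by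
        simp only [mem_ofPred_eq] at hz
        rw [Complex.sub_im, h.bot z hz.le]; simp))
      (fun z _ => by rw [hLe, exp_lu (hF0 z)]) ha ha'
  have ctop : ∀ b b' : ℂ, 1 ≤ b.im → 1 ≤ b'.im → L b - lu (F b - b) = L b' - lu (F b' - b') := by
    intro a a' ha ha'
    have hconv : Convex ℝ {z : ℂ | 1 ≤ z.im} := by
      exact convex_halfSpace_ge (f := Complex.im) Complex.imLm.isLinear 1
    exact clog_unique (S := {z : ℂ | 1 ≤ z.im}) hconv.isPreconnected hL.continuousOn
      (continuousOn_lu (by fun_prop) (fun z _ => hF0 z) (fun z hz => by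
        simp only [mem_ofPred_eq] at hz
        rw [Complex.sub_im, h.top z hz]; simp))
      (fun z _ => by rw [hLe, exp_lu (hF0 z)]) ha ha'
  suffices ∃ a b : ℂ, a.im = 0 ∧ 1 ≤ b.im ∧ L b - lu (F b - b) = L a - lu (F a - a) by
    obtain ⟨a, b, ha, hb, hab⟩ := this
    intro a' b' ha' hb'
    rw [ctop b' b hb' hb, cbot a' a ha' ha, hab]
  -- choose ε
  obtain ⟨ε, hε, hε1, hεδ⟩ : ∃ ε : ℝ, 0 < ε ∧ ε < 1 ∧ ε < δ :=
    ⟨min δ 1 / 2, by positivity, by linarith [min_le_right δ 1, lt_min hδ one_pos],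
      by linarith [min_le_left δ 1, lt_min hδ one_pos]⟩
  obtain ⟨w, n, hw0, hw1, hwn⟩ := hesc ε hε hε1
  set G : ℂ → ℂ := fun z => F z + ε * I with hGdef
  have hGc : Continuous G := by fun_prop
  have hGim : ∀ z, (G z).im = (F z).im + ε := by intro z; simp [G]
  have hGinj : Function.Injective G := by
    intro z z' hz
    apply h.inj
    simpa [G] using hz
  -- logarithm for G
  have hslit : ∀ (τ : ℝ), 0 ≤ τ → τ ≤ 1 → ∀ z, 1 + τ * ε * I / (F z - z) ∈ Complex.slitPlane := by
    intro τ h0 h1 z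
    left
    have hn : ‖τ * ε * I / (F z - z)‖ < 1 := by
      rw [norm_div, div_lt_one (by linarith [hdisp z])]
      simp only [norm_mul, Complex.norm_real, Real.norm_eq_abs, Complex.norm_I, mul_one,
        abs_of_nonneg h0, abs_of_pos hε]
      nlinarith [hdisp z]
    have := (abs_le.1 ((Complex.abs_re_le_norm _).trans hn.le)).1
    have h2 := (abs_lt.1 ((Complex.abs_re_le_norm _).trans_lt hn)).1
    simp only [Complex.add_re, Complex.one_re]
    linarith
  have hexpG : ∀ (τ : ℝ), 0 ≤ τ → τ ≤ 1 → ∀ z,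
      Complex.exp (L z + Complex.log (1 + τ * ε * I / (F z - z))) = F z - z + τ * ε * I := by
    intro τ h0 h1 z
    rw [Complex.exp_add, hLe, Complex.exp_log (Complex.slitPlane_ne_zero (hslit τ h0 h1 z))]
    have := hF0 z
    field_simp
  let LG : ℂ → ℂ := fun z => L z + Complex.log (1 + (1:ℝ) * ε * I / (F z - z))
  have hLGc : Continuous LG := by
    apply hL.add
    apply Continuous.clog
    · exact continuous_const.add (continuous_const.div (by fun_prop) hF0)
    · exact hslit 1 zero_le_one le_rfl
  have hLGe : ∀ z, Complex.exp (LG z) = G z - z := by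
    intro z
    simp only [LG]
    rw [hexpG 1 zero_le_one le_rfl z]; simp [G]; ring
  have hdef : ∀ z, (F z).im = z.im → LG z - lu (G z - z) = L z - lu (F z - z) := by
    intro z hz
    have hne : ∀ τ : ℝ, 0 ≤ τ → τ ≤ 1 → F z - z + τ * ε * I ≠ 0 := by
      intro τ h0 h1
      rw [← hexpG τ h0 h1 z]; exact Complex.exp_ne_zero _
    have := clog_unique (S := Icc (0:ℝ) 1) isPreconnected_Icc
      (L₁ := fun τ : ℝ => L z + Complex.log (1 + τ * ε * I / (F z - z)))
      (L₂ := fun τ : ℝ => lu (F z - z + τ * ε * I))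
      (by
        apply ContinuousOn.add continuousOn_const
        apply ContinuousOn.clog
        · fun_prop
        · intro τ hτ; exact hslit τ hτ.1 hτ.2 z)
      (continuousOn_lu (by fun_prop) (fun τ hτ => hne τ hτ.1 hτ.2) (fun τ hτ => by
        have : 0 ≤ τ * ε := mul_nonneg hτ.1 hε.le
        simpa [hz] using this))
      (fun τ hτ => by rw [hexpG τ hτ.1 hτ.2, exp_lu (hne τ hτ.1 hτ.2)])
      (a := 1) (b := 0) ⟨zero_le_one, le_rfl⟩ ⟨le_rfl, zero_le_one⟩
    simp only [LG]
    have hG1 : G z - z = F z - z + (1:ℝ) * ε * I := by simp [G]; ring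
    rw [hG1, this]
    simp
  -- the arc
  obtain ⟨x, hx⟩ := h.surj_seg (w.im / ε) (by positivity) ((div_le_one hε).2 hw1.le) w.re
  let z0 : ℂ := x
  have hz0im : (F z0).im = 0 := by rw [h.bot z0 (by simp [z0])]; simp [z0]
  let seg : ℝ → ℂ := fun r => z0 + r * (G z0 - z0)
  have hsegc : Continuous seg := by fun_prop
  have hsegim : ∀ r, (seg r).im = r * ε := by
    intro r; simp [seg, hGim, hz0im, z0]
  have hseg0 : seg 0 = z0 := by simp [seg]
  have hseg1 : seg 1 = G z0 := by simp [seg]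
  have hsegw : seg (w.im / ε) = w := by
    apply Complex.ext
    · simp [seg, G, z0, hGim]; linarith
    · rw [hsegim]; field_simp
  let Γ : ℝ → ℂ := fun t => G^[⌊t⌋₊] (seg (t - ⌊t⌋₊))
  have hΓ1 : ∀ t, 0 ≤ t → Γ (t + 1) = G (Γ t) := by
    intro t ht
    simp only [Γ]
    rw [Nat.floor_add_one ht, Function.iterate_succ_apply']
    push_cast
    congr 3; ring
  have hΓseg : ∀ t, 0 ≤ t → t < 1 → Γ t = seg t := by
    intro t h0 h1
    have : ⌊t⌋₊ = 0 := Nat.floor_eq_zero.2 h1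
    simp [Γ, this]
  have hΓ0 : Γ 0 = z0 := by rw [hΓseg 0 le_rfl one_pos, hseg0]
  have hΓseg' : ∀ t, 0 ≤ t → t ≤ 1 → Γ t = seg t := by
    intro t h0 h1
    rcases h1.lt_or_eq with h2 | h2
    · exact hΓseg t h0 h2
    · have := hΓ1 0 le_rfl
      rw [zero_add] at this
      rw [h2, this, hΓ0, hseg1]
  have hΓcN : ∀ N : ℕ, ContinuousOn Γ (Icc 0 (N + 1 : ℝ)) := by
    intro N
    induction N with
    | zero =>
      simp only [Nat.cast_zero, zero_add]
      exact hsegc.continuousOn.congr (fun t ht => hΓseg' t ht.1 ht.2)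
    | succ N ih =>
      have h2 : ContinuousOn Γ (Icc 1 ((N + 1 : ℕ) + 1 : ℝ)) := by
        have : ContinuousOn (fun t => G (Γ (t - 1))) (Icc 1 ((N + 1 : ℕ) + 1 : ℝ)) := by
          apply hGc.comp_continuousOn
          apply ih.comp (by fun_prop)
          intro t ht
          push_cast at ht
          exact ⟨by linarith [ht.1], by linarith [ht.2]⟩
        refine this.congr (fun t ht => ?_)
        have := hΓ1 (t - 1) (by linarith [ht.1])
        simpa using this
      have h1 : ContinuousOn Γ (Icc (0:ℝ) 1) :=
        hsegc.continuousOn.congr (fun t ht => hΓseg' t ht.1 ht.2)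
      have := h1.union_of_isClosed h2 isClosed_Icc isClosed_Icc
      rwa [Icc_union_Icc_eq_Icc zero_le_one (by push_cast; linarith [Nat.cast_nonneg (α := ℝ) N])] at this
  have hΓc : ContinuousOn Γ (Ici 0) := by
    intro t ht
    have h1 : (t:ℝ) < ⌈t⌉₊ + 1 := by linarith [Nat.le_ceil t]
    have := hΓcN ⌈t⌉₊ t ⟨ht, h1.le⟩
    refine this.mono_of_mem_nhdsWithin ?_
    have : Icc (0:ℝ) (⌈t⌉₊ + 1) = Ici 0 ∩ Iic ((⌈t⌉₊:ℝ) + 1) := rfl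
    rw [this]
    exact Filter.inter_mem self_mem_nhdsWithin (mem_nhdsWithin_of_mem_nhds (Iic_mem_nhds h1))
  -- heights
  have hGnn : ∀ (k : ℕ) (z : ℂ), 0 ≤ z.im → 0 ≤ (G^[k] z).im := by
    intro k
    induction k with
    | zero => intro z hz; simpa using hz
    | succ k ih =>
      intro z hz
      rw [Function.iterate_succ_apply', hGim]
      have := h.im_nonneg (ih z hz)
      linarith
  have hGεe : ∀ (k : ℕ) (z : ℂ), 0 ≤ z.im → 0 < k → ε ≤ (G^[k] z).im := by
    intro k z hz hk
    obtain ⟨k, rfl⟩ := Nat.exists_eq_succ_of_ne_zero hk.ne'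
    rw [Function.iterate_succ_apply', hGim]
    have := h.im_nonneg (hGnn k z hz)
    linarith
  have hfr : ∀ t : ℝ, 0 ≤ t → 0 ≤ t - ⌊t⌋₊ ∧ t - ⌊t⌋₊ < 1 := fun t ht =>
    ⟨by linarith [Nat.floor_le ht], by linarith [Nat.lt_floor_add_one t]⟩
  have hsegnn : ∀ t : ℝ, 0 ≤ t → 0 ≤ (seg (t - ⌊t⌋₊)).im ∧ (seg (t - ⌊t⌋₊)).im < ε := by
    intro t ht
    rw [hsegim]
    have := hfr t ht
    exact ⟨mul_nonneg this.1 hε.le, by nlinarith⟩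
  have hΓnn : ∀ t, 0 ≤ t → 0 ≤ (Γ t).im := fun t ht => hGnn _ _ (hsegnn t ht).1
  have hΓinj_aux : ∀ s t, 0 ≤ s → 0 ≤ t → Γ s = Γ t → ⌊s⌋₊ ≤ ⌊t⌋₊ → s = t := by
    intro s t hs ht hst hle
    simp only [Γ] at hst
    obtain ⟨k, hk⟩ := Nat.exists_eq_add_of_le hle
    rw [hk, Function.iterate_add_apply] at hst
    have h1 := (hGinj.iterate _) hst
    rcases Nat.eq_zero_or_pos k with hk0 | hk0
    · subst hk0
      rw [Function.iterate_zero_apply] at h1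
      have h2 := congrArg Complex.im h1
      rw [hsegim, hsegim] at h2
      have h3 := mul_right_cancel₀ hε.ne' h2
      push_cast at h3
      linarith
    · exfalso
      rw [← hk] at h1
      have h2 := (hsegnn s hs).2
      rw [h1] at h2
      linarith [hGεe k _ (hsegnn t ht).1 hk0]
  have hΓinj : InjOn Γ (Ici 0) := by
    intro s hs t ht hst
    rcases le_total ⌊s⌋₊ ⌊t⌋₊ with hl | hl
    · exact hΓinj_aux s t hs ht hst hl
    · exact (hΓinj_aux t s ht hs hst.symm hl).symm
  -- the end time
  have hs0 : 0 ≤ w.im / ε := by positivity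
  have hs1 : w.im / ε < 1 := (div_lt_one hε).2 hw1
  have hΓw : Γ (w.im / ε + (n + 1 : ℕ)) = G^[n + 1] w := by
    have hfl : ⌊w.im / ε + (n + 1 : ℕ)⌋₊ = n + 1 := by
      rw [Nat.floor_add_natCast hs0, Nat.floor_eq_zero.2 hs1, zero_add]
    simp only [Γ]
    rw [hfl, add_sub_cancel_right, hsegw]
  have hend : 1 + ε ≤ (G^[n + 1] w).im := by
    rw [Function.iterate_succ_apply', hGim, h.top _ hwn]; linarith
  set E : ℝ := w.im / ε + (n + 1 : ℕ) with hE
  have hE0 : 0 ≤ E := by positivity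
  obtain ⟨τ, hτ, hτmax⟩ := (isCompact_Icc (a := (0:ℝ)) (b := E)).exists_isMaxOn
    ⟨0, le_rfl, hE0⟩ (f := fun t => (Γ t).im)
    (Complex.continuous_im.comp_continuousOn (hΓc.mono (fun t ht => ht.1)))
  have hτh : 1 + ε ≤ (Γ τ).im := by
    have := hτmax (a := E) ⟨hE0, le_rfl⟩
    simp only [mem_ofPred_eq] at this
    rw [hΓw] at this
    linarith
  have hτ1 : 1 ≤ τ := by
    by_contra hlt
    push Not at hlt
    rw [hΓseg τ hτ.1 hlt, hsegim] at hτh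
    nlinarith [hτ.1]
  obtain ⟨T, rfl⟩ : ∃ T, τ = T + 1 := ⟨τ - 1, by ring⟩
  have hT : 0 ≤ T := by linarith
  have hTtop : 1 ≤ (Γ T).im := by
    by_contra hlt
    push Not at hlt
    have := h.im_lt_one hlt
    rw [hΓ1 T hT, hGim] at hτh
    linarith
  have key := turning Γ T hT (hΓc.mono (fun t ht => ht.1)) (hΓinj.mono (fun t ht => ht.1))
    (fun t ht => by rw [hΓ0]; simpa [z0] using hΓnn t ht.1)
    (fun t ht => hτmax (a := t) ⟨ht.1, ht.2.trans hτ.2⟩)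
    (fun s => LG (Γ s)) (hLGc.comp_continuousOn (hΓc.mono (fun t ht => ht.1)))
    (fun s hs => by rw [hLGe, hΓ1 s hs.1])
  have h01 : Γ 1 = G (Γ 0) := by simpa using hΓ1 0 le_rfl
  rw [hΓ1 T hT, h01] at key
  refine ⟨Γ 0, Γ T, by simp [hΓ0, z0], hTtop, ?_⟩
  rw [hdef _ (h.top _ hTtop), hdef _ (h.bot _ (by simp [hΓ0, z0]))] at key
  exact key


theorem StripMap.per_int {F : ℂ → ℂ} (h : StripMap F) (z : ℂ) (k : ℤ) :
    F (z + (k * (2 * Real.pi) : ℝ)) = F z + (k * (2 * Real.pi) : ℝ) := by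
  have hper : Function.Periodic (fun z => F z - z) ((2 * Real.pi : ℝ) : ℂ) := by
    intro z
    simp only [h.per z]; ring
  have := hper.int_mul k z
  push_cast at this ⊢
  linear_combination this

theorem StripMap.disp {F : ℂ → ℂ} (h : StripMap F)
    (hfix : ∀ z : ℂ, 0 ≤ z.im → z.im ≤ 1 → F z ≠ z) :
    ∃ δ > 0, ∀ z, δ ≤ ‖F z - z‖ := by
  have hF := h.cont
  have hK : IsCompact (Icc (0:ℝ) (2 * Real.pi) ×ℂ Icc (0:ℝ) 1) := isCompact_Icc.reProdIm isCompact_Icc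
  obtain ⟨z0, hz0, hmin⟩ := hK.exists_isMinOn (f := fun z => ‖F z - z‖)
    ⟨0, by simp [Complex.mem_reProdIm, Real.pi_pos.le]⟩ (by fun_prop)
  have hz0' := Complex.mem_reProdIm.1 hz0
  refine ⟨‖F z0 - z0‖, norm_pos_iff.2 (sub_ne_zero.2 (hfix z0 hz0'.2.1 hz0'.2.2)), ?_⟩
  have key : ∀ z : ℂ, 0 ≤ z.im → z.im ≤ 1 → ‖F z0 - z0‖ ≤ ‖F z - z‖ := by
    intro z h0 h1
    obtain ⟨k, hk, -⟩ := existsUnique_add_zsmul_mem_Ico (a := 2 * Real.pi) (by positivity) z.re 0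
    have := hmin (a := z + (k * (2 * Real.pi) : ℝ)) (by
      rw [Complex.mem_reProdIm]
      rw [zsmul_eq_mul, zero_add] at hk
      constructor
      · rw [Complex.add_re, Complex.ofReal_re]; exact ⟨hk.1, hk.2.le⟩
      · rw [Complex.add_im, Complex.ofReal_im, add_zero]; exact ⟨h0, h1⟩)
    simp only [mem_ofPred_eq, h.per_int z k] at this
    simpa using this
  intro z
  rcases le_or_gt z.im 0 with h0 | h0
  · have e : F z - z = F z.re - z.re := by
      apply Complex.ext
      · simp [h.botre z h0]
      · simp [h.bot z h0, h.bot z.re (by simp)]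
    rw [e]; exact key _ (by simp) (by simp)
  · rcases le_or_gt 1 z.im with h1 | h1
    · have e : F z - z = F (z.re + I) - (z.re + I) := by
        apply Complex.ext
        · simp [h.topre z h1]
        · simp [h.top z h1, h.top (z.re + I) (by simp)]
      rw [e]; exact key _ (by simp) (by simp)
    · exact key z h0.le h1.le

theorem StripMap.flip {F : ℂ → ℂ} (h : StripMap F) : StripMap (fun z => I - F (I - z)) where
  cont := by have := h.cont; fun_prop
  inj := by
    intro z z' hz
    have := h.inj (sub_right_injective hz)
    exact sub_right_injective this
  per := by
    intro z
    have := h.per (I - (z + (2 * Real.pi : ℝ)))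
    have e : I - (z + (2 * Real.pi : ℝ)) + (2 * Real.pi : ℝ) = I - z := by ring
    rw [e] at this
    rw [this]; ring
  top := by
    intro z hz
    have := h.bot (I - z) (by simpa using hz)
    simp [this]
  bot := by
    intro z hz
    have := h.top (I - z) (by simpa using hz)
    simp [this]
  mid := by
    intro z h0 h1
    have := h.mid (I - z) (by simpa using h1) (by simpa using h0)
    simpa using this.symm
  topre := by
    intro z hz
    have := h.botre (I - z) (by simpa using hz)
    simp [this]
  botre := by
    intro z hz
    have := h.topre (I - z) (by simpa using hz)
    simp only [sub_re, this]
    simp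
    congr 2; ring

/-- Poincaré–Birkhoff: a fixed point free strip map with the escape properties
has no boundary twist. -/
theorem poincare_birkhoff {F : ℂ → ℂ} (h : StripMap F)
    (hfix : ∀ z : ℂ, 0 ≤ z.im → z.im ≤ 1 → F z ≠ z)
    (hup : ∀ ε : ℝ, 0 < ε → ε < 1 → ∃ (w : ℂ) (n : ℕ), 0 ≤ w.im ∧ w.im < ε ∧
      1 ≤ ((fun z => F z + ε * I)^[n] w).im)
    (hdown : ∀ ε : ℝ, 0 < ε → ε < 1 → ∃ (w : ℂ) (n : ℕ), 1 - ε < w.im ∧ w.im ≤ 1 ∧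
      ((fun z => F z - ε * I)^[n] w).im ≤ 0)
    (x y : ℝ) : ¬ ((F x - x).re < 0 ∧ 0 < (F (y + I) - (y + I)).re) ∧
      ¬ (0 < (F x - x).re ∧ (F (y + I) - (y + I)).re < 0) := by
  obtain ⟨δ, hδ, hdisp⟩ := h.disp hfix
  have hF := h.cont
  have hF0 : ∀ z, F z - z ≠ 0 := fun z h0 => by
    have := hdisp z; rw [h0, norm_zero] at this; linarith
  obtain ⟨L, hL, hLe⟩ := exists_clog (fun z => F z - z) (by fun_prop) hF0
  have H1 := half_turn h δ hδ hdisp hup L hL hLe x (y + I) (by simp) (by simp)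
  have H2 := half_turn h.flip δ hδ
    (fun z => by
      have := hdisp (I - z)
      rw [show (I - F (I - z)) - z = -(F (I - z) - (I - z)) by ring, norm_neg]
      exact this)
    (fun ε h0 h1 => by
      obtain ⟨w, n, hw1, hw2, hw3⟩ := hdown ε h0 h1
      refine ⟨I - w, n, by simpa using hw2, by simp; linarith, ?_⟩
      have hs : Function.Semiconj (fun z : ℂ => I - z) (fun z => F z - ε * I)
          (fun z => I - F (I - z) + ε * I) := by
        intro z; simp only [sub_sub_cancel]; ring
      have := hs.iterate_right n w
      rw [← this]
      simpa using hw3)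
    (fun z => L (I - z) + Real.pi * I) (by fun_prop)
    (fun z => by
      rw [Complex.exp_add, Complex.exp_pi_mul_I, hLe]; ring)
    (-y) (I - x) (by simp) (by simp)
  set d0 : ℝ := (F x - x).re with hd0
  set d1 : ℝ := (F (y + I) - (y + I)).re with hd1
  have e0 : F x - x = d0 := by
    apply Complex.ext
    · simp [hd0]
    · simp [h.bot x (by simp)]
  have e1 : F (y + I) - (y + I) = d1 := by
    apply Complex.ext
    · simp [hd1]
    · simp [h.top (y + I) (by simp)]
  simp only [sub_sub_cancel, sub_neg_eq_add] at H2
  have e0' : I - F x - (I - x) = ((-d0 : ℝ) : ℂ) := by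
    push_cast; rw [← e0]; ring
  have e1' : I - F (I + y) + y = ((-d1 : ℝ) : ℂ) := by
    push_cast; rw [← e1, add_comm I]; ring
  rw [e0', e1', add_comm I] at H2
  rw [e0, e1] at H1
  have K1 := congrArg Complex.im H1
  have K2 := congrArg Complex.im H2
  simp only [Complex.sub_im, Complex.add_im] at K1 K2
  have hpi := Real.pi_pos
  constructor
  · rintro ⟨h0, h1⟩
    rw [lu_neg h0, lu_pos h1] at K1
    rw [lu_neg (neg_lt_zero.2 h1), lu_pos (neg_pos.2 h0)] at K2
    linarith
  · rintro ⟨h0, h1⟩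
    rw [lu_pos h0, lu_neg h1] at K1
    rw [lu_neg (neg_lt_zero.2 h0), lu_pos (neg_pos.2 h1)] at K2
    linarith


theorem det_complex (A : ℂ →L[ℝ] ℂ) :
    A.det = (A 1).re * (A I).im - (A I).re * (A 1).im := by
  have : A.det = LinearMap.det (A : ℂ →ₗ[ℝ] ℂ) := rfl
  rw [this, ← LinearMap.det_toMatrix Complex.basisOneI, Matrix.det_fin_two]
  simp [LinearMap.toMatrix_apply]

/-- If a set never returns to itself, some orbit has to leave any finite measure set. -/
theorem escape {α : Type*} [MeasurableSpace α] (μ : MeasureTheory.Measure α) (U E0 : Set α)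
    (g : α → α) (hU : μ U ≠ ⊤) (hpos : μ E0 ≠ 0) (hmeas : MeasurableSet E0)
    (hinj : InjOn g U)
    (himg : ∀ E ⊆ U, MeasurableSet E → MeasurableSet (g '' E) ∧ μ (g '' E) = μ E)
    (hdis : ∀ z ∈ U, g z ∉ E0) : ∃ w ∈ E0, ∃ n, g^[n] w ∉ U := by
  by_contra hcon
  push Not at hcon
  have hsub : ∀ n, g^[n] '' E0 ⊆ U := by
    rintro n _ ⟨w, hw, rfl⟩; exact hcon w hw n
  have hsucc : ∀ n, g^[n + 1] '' E0 = g '' (g^[n] '' E0) := by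
    intro n
    rw [Function.iterate_succ', image_comp]
  have hm : ∀ n, MeasurableSet (g^[n] '' E0) ∧ μ (g^[n] '' E0) = μ E0 := by
    intro n
    induction n with
    | zero => simpa using hmeas
    | succ n ih =>
      rw [hsucc]
      have := himg _ (hsub n) ih.1
      exact ⟨this.1, this.2.trans ih.2⟩
  have hret : ∀ k, ∀ a ∈ E0, ∀ b ∈ E0, ∀ i, g^[i] a = g^[i + (k + 1)] b → False := by
    intro k a ha b hb i
    induction i with
    | zero =>
      intro hab
      rw [Function.iterate_zero_apply, zero_add, Function.iterate_succ_apply'] at hab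
      exact hdis _ (hcon b hb k) (hab ▸ ha)
    | succ i ih =>
      intro hab
      rw [Function.iterate_succ_apply', show i + 1 + (k + 1) = (i + (k + 1)) + 1 by ring,
        Function.iterate_succ_apply'] at hab
      exact ih (hinj (hcon a ha _) (hcon b hb _) hab)
  have hlt : ∀ i j, i < j → Disjoint (g^[i] '' E0) (g^[j] '' E0) := by
    intro i j hij
    obtain ⟨k, rfl⟩ := Nat.exists_eq_add_of_lt hij
    rw [Set.disjoint_left]
    rintro _ ⟨a, ha, rfl⟩ ⟨b, hb, hab⟩
    exact hret k a ha b hb i (by rw [← hab, add_assoc])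
  have hdisj : Pairwise (Function.onFun Disjoint (fun n => g^[n] '' E0)) := by
    intro i j hij
    rcases lt_or_gt_of_ne hij with h | h
    · exact hlt i j h
    · exact (hlt j i h).symm
  have h1 := MeasureTheory.measure_iUnion (μ := μ) hdisj (fun n => (hm n).1)
  have h2 : ∑' n : ℕ, μ (g^[n] '' E0) = ⊤ := by
    rw [tsum_congr (fun n => (hm n).2)]
    exact ENNReal.tsum_const_eq_top_of_ne_zero hpos
  have h3 : μ (⋃ n, g^[n] '' E0) ≤ μ U := MeasureTheory.measure_mono (iUnion_subset hsub)
  rw [h1, h2] at h3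
  exact hU (top_le_iff.1 h3)

/-- Radial area preserving push. -/
noncomputable def rad (e : ℝ) (z : ℂ) : ℂ := Real.sqrt (1 + e / ‖z‖ ^ 2) • z

theorem rad_norm_sq {e : ℝ} {z : ℂ} (hz : z ≠ 0) (he : 0 ≤ ‖z‖ ^ 2 + e) :
    ‖rad e z‖ ^ 2 = ‖z‖ ^ 2 + e := by
  have hp : 0 < ‖z‖ ^ 2 := by positivity
  have h1 : 0 ≤ 1 + e / ‖z‖ ^ 2 := by
    rw [one_add_div hp.ne']; positivity
  rw [rad, norm_smul, mul_pow, Real.norm_eq_abs, sq_abs, Real.sq_sqrt h1]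
  field_simp

theorem rad_injOn (e : ℝ) : InjOn (rad e) {z | z ≠ 0 ∧ 0 < ‖z‖ ^ 2 + e} := by
  intro z hz w hw hzw
  have h1 := rad_norm_sq hz.1 hz.2.le
  have h2 := rad_norm_sq hw.1 hw.2.le
  rw [hzw, h2] at h1
  have h3 : ‖w‖ ^ 2 = ‖z‖ ^ 2 := by linarith
  have hp : 0 < ‖z‖ ^ 2 := by have := hz.1; positivity
  unfold rad at hzw
  rw [h3] at hzw
  have h4 : 0 < 1 + e / ‖z‖ ^ 2 := by
    rw [one_add_div hp.ne']; exact div_pos hz.2 hp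
  exact smul_right_injective ℂ (Real.sqrt_pos.2 h4).ne' hzw

theorem rad_hasFDerivAt {e : ℝ} {z : ℂ} (hz : z ≠ 0) (he : 0 < ‖z‖ ^ 2 + e) :
    ∃ A : ℂ →L[ℝ] ℂ, HasFDerivAt (rad e) A z ∧ A.det = 1 := by
  have hp : 0 < ‖z‖ ^ 2 := by positivity
  have h4 : 0 < 1 + e / ‖z‖ ^ 2 := by
    rw [one_add_div hp.ne']; exact div_pos he hp
  have hns : HasFDerivAt (fun x : ℂ => ‖x‖ ^ 2) (2 • (innerSL ℝ z)) z :=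
    (hasStrictFDerivAt_norm_sq z).hasFDerivAt
  have hd : HasDerivAt (fun s : ℝ => Real.sqrt (1 + e / s))
      ((-e / (‖z‖ ^ 2) ^ 2) / (2 * Real.sqrt (1 + e / ‖z‖ ^ 2))) (‖z‖ ^ 2) := by
    have h5 : HasDerivAt (fun s : ℝ => 1 + e / s) (-e / (‖z‖ ^ 2) ^ 2) (‖z‖ ^ 2) := by
      have := ((hasDerivAt_const (‖z‖ ^ 2) e).div (hasDerivAt_id (‖z‖ ^ 2)) hp.ne').const_add 1
      simpa using this
    exact h5.sqrt h4.ne'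
  obtain ⟨k, hk⟩ : ∃ k, k = (-e / (‖z‖ ^ 2) ^ 2) / (2 * Real.sqrt (1 + e / ‖z‖ ^ 2)) := ⟨_, rfl⟩
  rw [← hk] at hd
  have hR := (hd.comp_hasFDerivAt z hns).smul (hasFDerivAt_id z)
  refine ⟨_, hR, ?_⟩
  rw [det_complex]
  have hn : ‖z‖ ^ 2 = z.re ^ 2 + z.im ^ 2 := by
    rw [← Complex.normSq_eq_norm_sq, Complex.normSq_apply]; ring
  set q := Real.sqrt (1 + e / ‖z‖ ^ 2) with hq
  have hq2 : q ^ 2 = 1 + e / ‖z‖ ^ 2 := Real.sq_sqrt h4.le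
  have hq0 : 0 < q := Real.sqrt_pos.2 h4
  simp [Complex.inner, ← hq]
  have hk2 : q ^ 2 + 2 * q * k * ‖z‖ ^ 2 = 1 := by
    rw [hk, hq2]; field_simp; ring
  rw [hn] at hk2
  linear_combination hk2

theorem rad_volume (e : ℝ) (E : Set ℂ) (hE : E ⊆ {z | z ≠ 0 ∧ 0 < ‖z‖ ^ 2 + e})
    (hm : MeasurableSet E) :
    MeasurableSet (rad e '' E) ∧ MeasureTheory.volume (rad e '' E) = MeasureTheory.volume E := by
  have h : ∀ z ∈ E, ∃ A : ℂ →L[ℝ] ℂ, HasFDerivAt (rad e) A z ∧ A.det = 1 :=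
    fun z hz => rad_hasFDerivAt (hE hz).1 (hE hz).2
  choose! A hA hdet using h
  have hinj := (rad_injOn e).mono hE
  constructor
  · exact hm.image_of_continuousOn_injOn
      (fun z hz => (hA z hz).continuousAt.continuousWithinAt) hinj
  · rw [← MeasureTheory.lintegral_abs_det_fderiv_eq_addHaar_image MeasureTheory.volume hm
      (fun z hz => (hA z hz).hasFDerivWithinAt) hinj]
    rw [MeasureTheory.setLIntegral_congr_fun (g := fun _ => 1) hm (fun z hz => by
      simp [hdet z hz])]
    simp

/-- Polar-type coordinates, in which area is Lebesgue measure (up to a factor). -/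
noncomputable def pol (z : ℂ) : ℂ := Real.sqrt z.im • Complex.exp (z.re * I)

theorem pol_norm_sq {z : ℂ} (hz : 0 ≤ z.im) : ‖pol z‖ ^ 2 = z.im := by
  rw [pol, norm_smul, Complex.norm_exp_ofReal_mul_I, mul_one, Real.norm_eq_abs, sq_abs,
    Real.sq_sqrt hz]

theorem pol_ne {z : ℂ} (hz : 0 < z.im) : pol z ≠ 0 := by
  intro h
  have := pol_norm_sq hz.le
  rw [h] at this
  simp at this
  linarith

theorem pol_surj {p : ℂ} : ∃ z : ℂ, z.im = ‖p‖ ^ 2 ∧ pol z = p := by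
  refine ⟨⟨Complex.arg p, ‖p‖ ^ 2⟩, rfl, ?_⟩
  simp only [pol]
  rw [Real.sqrt_sq (norm_nonneg _), Complex.real_smul]
  exact Complex.norm_mul_exp_arg_mul_I p

theorem pol_mem {z : ℂ} (h0 : 0 ≤ z.im) (h1 : z.im ≤ 1) : pol z ∈ closedBall (0:ℂ) 1 := by
  rw [mem_closedBall_zero_iff]
  have := pol_norm_sq h0
  nlinarith [norm_nonneg (pol z)]

theorem rad_pol {e : ℝ} {z : ℂ} (hz : 0 < z.im) (he : 0 ≤ z.im + e) :
    pol (z + e * I) = rad e (pol z) := by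
  have h1 : 0 ≤ 1 + e / z.im := by rw [one_add_div hz.ne']; positivity
  rw [rad, pol_norm_sq hz.le, pol, pol, smul_smul, ← Real.sqrt_mul h1]
  congr 2
  · simp; field_simp
  · simp

/-- Area preserving injective self-maps of the disk fixing the origin. -/
structure DiskMap (h : ℂ → ℂ) : Prop where
  cont : ContinuousOn h (closedBall 0 1)
  maps : MapsTo h (closedBall 0 1) (closedBall 0 1)
  inj : InjOn h (closedBall 0 1)
  zero : h 0 = 0
  vol : ∀ E ⊆ closedBall (0:ℂ) 1, MeasurableSet E →
    MeasureTheory.volume (h '' E) = MeasureTheory.volume E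

theorem DiskMap.ne_zero {h : ℂ → ℂ} (hh : DiskMap h) {z : ℂ} (hz : z ∈ closedBall (0:ℂ) 1)
    (h0 : z ≠ 0) : h z ≠ 0 := by
  intro hc
  exact h0 (hh.inj hz (by simp) (hc.trans hh.zero.symm))

/-- `F` is a lift of the disk map `h` to the blown up strip. -/
structure IsLift (h F : ℂ → ℂ) : Prop where
  strip : StripMap F
  semi : ∀ z : ℂ, 0 < z.im → z.im ≤ 1 → pol (F z) = h (pol z)

theorem IsLift.im_eq {h F : ℂ → ℂ} (hF : IsLift h F) {z : ℂ} (h0 : 0 < z.im) (h1 : z.im ≤ 1) :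
    (F z).im = ‖h (pol z)‖ ^ 2 := by
  rw [← hF.semi z h0 h1, pol_norm_sq (hF.strip.im_nonneg h0.le)]

/-- The common escape lemma: `e` is the signed size of the radial push. -/
theorem escape_lift {h F : ℂ → ℂ} (hh : DiskMap h) (hF : IsLift h F) (e : ℝ)
    (E0 : Set ℂ) (hE0m : MeasurableSet E0) (hpos : MeasureTheory.volume E0 ≠ 0)
    (hE0 : ∀ z ∈ E0, z ≠ 0 ∧ ‖z‖ ≤ 1)
    (hdis : ∀ z : ℂ, z ≠ 0 → ‖z‖ ≤ 1 → 0 < ‖h z‖ ^ 2 + e → rad e (h z) ∉ E0) :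
    ∃ w : ℂ, 0 < w.im ∧ w.im ≤ 1 ∧ pol w ∈ E0 ∧ ∃ n : ℕ,
      (1 < ((fun z => F z + e * I)^[n] w).im ∨ ((fun z => F z + e * I)^[n] w).im ≤ 0) := by
  set U : Set ℂ := {z | z ≠ 0 ∧ ‖z‖ ≤ 1 ∧ 0 < ‖h z‖ ^ 2 + e} with hUdef
  have hUsub : U ⊆ closedBall (0:ℂ) 1 := fun z hz => mem_closedBall_zero_iff.2 hz.2.1
  have hUh : ∀ z ∈ U, h z ∈ {z : ℂ | z ≠ 0 ∧ 0 < ‖z‖ ^ 2 + e} := fun z hz =>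
    ⟨hh.ne_zero (hUsub hz) hz.1, hz.2.2⟩
  obtain ⟨p, hp, n, hn⟩ := escape MeasureTheory.volume U E0 (fun z => rad e (h z))
    ((MeasureTheory.measure_mono hUsub).trans_lt MeasureTheory.measure_closedBall_lt_top).ne hpos hE0m
    (fun z hz w hw hzw => hh.inj (hUsub hz) (hUsub hw) (rad_injOn e (hUh z hz) (hUh w hw) hzw))
    (fun E hE hm => by
      have hm1 : MeasurableSet (h '' E) := hm.image_of_continuousOn_injOn
        (hh.cont.mono (hE.trans hUsub)) (hh.inj.mono (hE.trans hUsub))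
      have := rad_volume e (h '' E) (by rintro _ ⟨z, hz, rfl⟩; exact hUh z (hE hz)) hm1
      rw [← image_image (rad e) h]
      exact ⟨this.1, this.2.trans (hh.vol E (hE.trans hUsub) hm)⟩)
    (fun z hz => hdis z hz.1 hz.2.1 hz.2.2)
  obtain ⟨w, hwim, rfl⟩ := pol_surj (p := p)
  have hw0 : 0 < w.im := by rw [hwim]; have := (hE0 _ hp).1; positivity
  have hw1 : w.im ≤ 1 := by rw [hwim]; have := (hE0 _ hp).2; nlinarith [norm_nonneg (pol w)]
  refine ⟨w, hw0, hw1, hp, ?_⟩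
  by_contra hcon
  push Not at hcon
  have him : ∀ n, pol ((fun z => F z + e * I)^[n] w) = (fun z => rad e (h z))^[n] (pol w) := by
    intro n
    induction n with
    | zero => rfl
    | succ n ih =>
      have hc := hcon n
      have hc1 := hcon (n + 1)
      rw [Function.iterate_succ_apply'] at hc1
      rw [Function.iterate_succ_apply', Function.iterate_succ_apply', ← ih]
      set u := (fun z => F z + e * I)^[n] w
      have hFu : 0 < (F u).im := by
        rcases hc.1.lt_or_eq with h1 | h1
        · exact (hF.strip.mid u hc.2 h1).1
        · rw [hF.strip.top u h1.ge]; exact hc.2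
      rw [rad_pol hFu (by simpa using hc1.2.le), hF.semi u hc.2 hc.1]
  apply hn
  have hc := hcon n
  have hc1 := hcon (n + 1)
  rw [Function.iterate_succ_apply'] at hc1
  rw [← him n]
  set u := (fun z => F z + e * I)^[n] w
  refine ⟨pol_ne hc.2, mem_closedBall_zero_iff.1 (pol_mem hc.2.le hc.1), ?_⟩
  rw [← hF.im_eq hc.2 hc.1]
  simpa using hc1.2

theorem escape_up {h F : ℂ → ℂ} (hh : DiskMap h) (hF : IsLift h F) (ε : ℝ) (h0 : 0 < ε)
    (h1 : ε < 1) : ∃ (w : ℂ) (n : ℕ), 0 ≤ w.im ∧ w.im < ε ∧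
      1 ≤ ((fun z => F z + ε * I)^[n] w).im := by
  have hop : IsOpen {z : ℂ | z ≠ 0 ∧ ‖z‖ ^ 2 < ε} :=
    IsOpen.and isOpen_ne (isOpen_lt (f := fun z : ℂ => ‖z‖ ^ 2) (by fun_prop) continuous_const)
  obtain ⟨w, hw0, hw1, hwE, n, hn⟩ := escape_lift hh hF ε {z | z ≠ 0 ∧ ‖z‖ ^ 2 < ε}
    hop.measurableSet
    (hop.measure_ne_zero _ ⟨((Real.sqrt ε / 2 : ℝ) : ℂ), by
      constructor
      · have := Real.sqrt_pos.2 h0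
        exact_mod_cast (by positivity : Real.sqrt ε / 2 ≠ 0)
      · rw [Complex.norm_real, Real.norm_eq_abs, sq_abs, div_pow, Real.sq_sqrt h0.le]
        linarith⟩)
    (fun z hz => ⟨hz.1, by nlinarith [norm_nonneg z, hz.2]⟩)
    (fun z hz0 hz1 _ hmem => by
      have hne := hh.ne_zero (mem_closedBall_zero_iff.2 hz1) hz0
      have := hmem.2
      rw [rad_norm_sq hne (by positivity)] at this
      nlinarith [norm_nonneg (h z)])
  refine ⟨w, n, hw0.le, by rw [← pol_norm_sq hw0.le]; exact hwE.2, ?_⟩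
  rcases hn with hn | hn
  · exact hn.le
  · exfalso
    have : ∀ n, 0 < ((fun z => F z + ε * I)^[n] w).im := by
      intro n
      induction n with
      | zero => exact hw0
      | succ n ih =>
        rw [Function.iterate_succ_apply']
        have := hF.strip.im_nonneg ih.le
        simp only [add_im, mul_im, ofReal_re, I_im, mul_one, ofReal_im, I_re, mul_zero, add_zero]
        linarith
    linarith [this n]

theorem escape_down {h F : ℂ → ℂ} (hh : DiskMap h) (hF : IsLift h F) (ε : ℝ) (h0 : 0 < ε)
    (h1 : ε < 1) : ∃ (w : ℂ) (n : ℕ), 1 - ε < w.im ∧ w.im ≤ 1 ∧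
      ((fun z => F z - ε * I)^[n] w).im ≤ 0 := by
  have hop : IsOpen {z : ℂ | 1 - ε < ‖z‖ ^ 2 ∧ ‖z‖ < 1} :=
    IsOpen.and (isOpen_lt (g := fun z : ℂ => ‖z‖ ^ 2) continuous_const (by fun_prop))
      (isOpen_lt (f := fun z : ℂ => ‖z‖) (by fun_prop) continuous_const)
  obtain ⟨w, hw0, hw1, hwE, n, hn⟩ := escape_lift hh hF (-ε) {z | 1 - ε < ‖z‖ ^ 2 ∧ ‖z‖ < 1}
    hop.measurableSet
    (hop.measure_ne_zero _ ⟨((1 - ε / 4 : ℝ) : ℂ), by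
      constructor
      · rw [Complex.norm_real, Real.norm_eq_abs, sq_abs]; nlinarith
      · rw [Complex.norm_real, Real.norm_eq_abs, abs_lt]; constructor <;> linarith⟩)
    (fun z hz => ⟨by rintro rfl; have := hz.1; simp at this; linarith, hz.2.le⟩)
    (fun z hz0 hz1 hpos hmem => by
      have hb := mem_closedBall_zero_iff.2 hz1
      have hne := hh.ne_zero hb hz0
      have := hmem.1
      rw [rad_norm_sq hne hpos.le] at this
      have := mem_closedBall_zero_iff.1 (hh.maps hb)
      nlinarith [norm_nonneg (h z)])
  have hfun : (fun z => F z - ε * I) = (fun z => F z + ((-ε : ℝ) : ℂ) * I) := by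
    funext z; push_cast; ring
  rw [hfun]
  refine ⟨w, n, by rw [← pol_norm_sq hw0.le]; exact hwE.1, hw1, ?_⟩
  rcases hn with hn | hn
  · exfalso
    have : ∀ n, ((fun z => F z + ((-ε : ℝ) : ℂ) * I)^[n] w).im ≤ 1 := by
      intro n
      induction n with
      | zero => exact hw1
      | succ n ih =>
        rw [Function.iterate_succ_apply']
        set u := (fun z => F z + ((-ε : ℝ) : ℂ) * I)^[n] w
        have : (F u).im ≤ 1 := by
          rcases ih.lt_or_eq with h2 | h2
          · exact (hF.strip.im_lt_one h2).le
          · rw [hF.strip.top u h2.ge]; exact ih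
        simp only [add_im, mul_im, ofReal_re, I_im, mul_one, ofReal_im, I_re, mul_zero, add_zero]
        linarith
    linarith [this n]
  · exact hn


theorem conformal_split (A : ℂ →L[ℝ] ℂ) (hdet : 0 < A.det) :
    ∃ a b : ℂ, ‖b‖ < ‖a‖ ∧ ∀ x : ℝ, A (Complex.exp (x * I)) / Complex.exp (x * I) =
      a + b * Complex.exp (-(2 * x * I)) := by
  refine ⟨(A 1 - I * A I) / 2, (A 1 + I * A I) / 2, ?_, ?_⟩
  · rw [det_complex] at hdet
    rw [← sq_lt_sq₀ (norm_nonneg _) (norm_nonneg _), ← Complex.normSq_eq_norm_sq,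
      ← Complex.normSq_eq_norm_sq, ← sub_pos]
    simp only [Complex.normSq_apply]
    simp
    linarith
  · intro x
    set u := Complex.exp (x * I) with hu
    have hu0 : u ≠ 0 := Complex.exp_ne_zero _
    have hu' : u = Real.cos x + Real.sin x * I := by
      rw [hu, Complex.exp_mul_I]; simp
    have hAu : A u = Real.cos x * A 1 + Real.sin x * A I := by
      have : u = Real.cos x • (1:ℂ) + Real.sin x • I := by rw [hu']; simp
      rw [this, map_add, map_smul, map_smul]; simp
    have hinv : Complex.exp (-(2 * x * I)) = (Real.cos x - Real.sin x * I) / u := by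
      rw [eq_div_iff hu0, hu, ← Complex.exp_add]
      have : -(2 * (x:ℂ) * I) + x * I = (-x : ℂ) * I := by ring
      rw [this, Complex.exp_mul_I, Complex.cos_neg, Complex.sin_neg]; simp; ring
    rw [hinv, hAu]
    field_simp
    rw [hu']
    linear_combination (A I * Real.sin x * 2) * Complex.I_sq

theorem exists_lift {f : ℂ → ℂ} (hf : DiskMap f)
    (hbd : ∀ z : ℂ, ‖z‖ = 1 → ‖f z‖ = 1) (hinside : ∀ z : ℂ, ‖z‖ < 1 → ‖f z‖ < 1)
    (A : ℂ →L[ℝ] ℂ) (hA : HasFDerivAt f A 0) (hdet : 0 < A.det) (x0 r : ℝ) (hr : 0 < r)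
    (hev : A (Complex.exp (x0 * I)) = r * Complex.exp (x0 * I)) :
    ∃ F, IsLift f F ∧ F x0 = x0 := by
  obtain ⟨a, b, hab, hsplit⟩ := conformal_split A hdet
  have ha0 : a ≠ 0 := by
    intro h; rw [h, norm_zero] at hab; exact absurd hab (not_lt.2 (norm_nonneg _))
  have hAinj : ∀ v : ℂ, A v = 0 → v = 0 := by
    have : Function.Injective (A : ℂ →ₗ[ℝ] ℂ) := by
      apply (LinearMap.equivOfDetNeZero (A : ℂ →ₗ[ℝ] ℂ) hdet.ne').injective
    intro v hv
    exact this (hv.trans (map_zero A).symm)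
  let c : ℝ → ℝ := fun y => max 0 (min y 1)
  have hcc : Continuous c := by fun_prop
  have hc0 : ∀ y, 0 ≤ c y := fun y => le_max_left _ _
  have hc1 : ∀ y, c y ≤ 1 := fun y => max_le zero_le_one (min_le_right _ _)
  have hcid : ∀ y, 0 ≤ y → y ≤ 1 → c y = y := fun y h0 h1 => by
    simp only [c]; rw [min_eq_left h1, max_eq_right h0]
  have hcbot : ∀ y, y ≤ 0 → c y = 0 := fun y h0 => by
    simp only [c]; exact max_eq_left ((min_le_left _ _).trans h0)
  have hctop : ∀ y, 1 ≤ y → c y = 1 := fun y h0 => by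
    simp only [c]; rw [min_eq_right h0]; exact max_eq_right zero_le_one
  let u : ℂ → ℂ := fun z => Complex.exp (z.re * I)
  have huc : Continuous u := by fun_prop
  have hu0 : ∀ z, u z ≠ 0 := fun z => Complex.exp_ne_zero _
  have hun : ∀ z, ‖u z‖ = 1 := fun z => Complex.norm_exp_ofReal_mul_I _
  let k : ℂ → ℂ := fun z => Real.sqrt (c z.im) • u z
  have hkc : Continuous k := by fun_prop
  have hkn : ∀ z, ‖k z‖ = Real.sqrt (c z.im) := fun z => by
    simp only [k]; rw [norm_smul, hun, mul_one, Real.norm_eq_abs, abs_of_nonneg (Real.sqrt_nonneg _)]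
  have hkm : ∀ z, k z ∈ closedBall (0:ℂ) 1 := fun z => by
    rw [mem_closedBall_zero_iff, hkn]; exact Real.sqrt_le_one.2 (hc1 _)
  -- the remainder
  let η : ℂ → ℂ := fun z => (f z - A z) / (‖z‖ : ℂ)
  have hη0 : η 0 = 0 := by simp [η]
  have hηc : ContinuousOn η (closedBall 0 1) := by
    intro z hz
    by_cases h0 : z = 0
    · subst h0
      apply ContinuousAt.continuousWithinAt
      rw [ContinuousAt, hη0, tendsto_zero_iff_norm_tendsto_zero]
      have := hasFDerivAt_iff_tendsto.1 hA
      refine this.congr (fun z => ?_)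
      simp [η, hf.zero, div_eq_inv_mul]
    · apply ContinuousWithinAt.div
      · exact (hf.cont z hz).sub A.continuous.continuousWithinAt
      · fun_prop
      · simpa using h0
  let N : ℂ → ℂ := fun z => A (u z) + η (k z)
  have hNc : Continuous N := by
    apply Continuous.add (A.continuous.comp huc)
    exact hηc.comp_continuous hkc hkm
  have hfk : ∀ z, f (k z) = Real.sqrt (c z.im) • N z := by
    intro z
    by_cases h0 : Real.sqrt (c z.im) = 0
    · have : k z = 0 := by simp [k, h0]
      rw [this, h0, hf.zero, zero_smul]
    · simp only [N, η, smul_add, hkn]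
      have : A (k z) = Real.sqrt (c z.im) • A (u z) := by simp only [k]; rw [map_smul]
      rw [this]
      simp only [Complex.real_smul]
      have h0' : (Real.sqrt (c z.im) : ℂ) ≠ 0 := by exact_mod_cast h0
      field_simp
      ring
  have hNbot : ∀ z : ℂ, z.im ≤ 0 → N z = A (u z) := by
    intro z hz
    have : k z = 0 := by simp [k, hcbot _ hz]
    simp [N, this, hη0]
  have hN0 : ∀ z, N z ≠ 0 := by
    intro z hz
    by_cases h0 : k z = 0
    · have : A (u z) = 0 := by simpa [N, h0, hη0] using hz
      exact hu0 z (hAinj _ this)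
    · apply hf.ne_zero (hkm z) h0
      rw [hfk, hz, smul_zero]
  obtain ⟨L, hL, hLe⟩ := exists_clog (fun z => N z / u z) (hNc.div huc hu0)
    (fun z => div_ne_zero (hN0 z) (hu0 z))
  let K : ℂ → ℂ := fun z => z.re + c z.im * I
  have hKc : Continuous K := by fun_prop
  have hKre : ∀ z, (K z).re = z.re := fun z => by simp [K]
  have hKim : ∀ z, (K z).im = c z.im := fun z => by simp [K]
  have hcK : ∀ z, c (K z).im = c z.im := fun z => by rw [hKim, hcid _ (hc0 _) (hc1 _)]
  have huK : ∀ z, u (K z) = u z := fun z => by simp only [u, hKre]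
  have hNK : ∀ z, N (K z) = N z := fun z => by simp only [N, k, huK, hcK]
  have hKx0 : K x0 = x0 := by simp [K, c]
  have hLx0 : Complex.exp (L x0) = r := by
    rw [hLe, hNbot _ (by simp)]
    simp only [u, Complex.ofReal_re, hev]
    field_simp
  have hnorm1 : Complex.exp ((L x0).im * I) = 1 := by
    have h1 : Complex.exp (L x0) = Complex.exp ((L x0).re) * Complex.exp ((L x0).im * I) := by
      rw [← Complex.exp_add, Complex.re_add_im]
    have h2 : Real.exp ((L x0).re) = r := by
      have := congrArg norm hLx0
      rwa [Complex.norm_exp, Complex.norm_real, Real.norm_eq_abs, abs_of_pos hr] at this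
    rw [hLx0, ← Complex.ofReal_exp, h2] at h1
    have hr' : (r:ℂ) ≠ 0 := by exact_mod_cast hr.ne'
    exact mul_left_cancel₀ hr' (by rw [mul_one]; exact h1.symm)
  let ℓ : ℂ → ℂ := fun z => L (K z) - (L x0).im * I
  have hℓc : Continuous ℓ := by fun_prop
  have hℓe : ∀ z, Complex.exp (ℓ z) = N z / u z := by
    intro z
    simp only [ℓ]
    rw [Complex.exp_sub, hnorm1, div_one, hLe, hNK, huK]
  have hℓx0 : (ℓ x0).im = 0 := by simp [ℓ, hKx0]
  -- polar decomposition of N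
  have hpolN : ∀ z, (‖N z‖ : ℂ) * Complex.exp ((z.re + (ℓ z).im : ℝ) * I) = N z := by
    intro z
    have h1 : ‖N z‖ = Real.exp (ℓ z).re := by
      rw [← Complex.norm_exp, hℓe, norm_div, hun, div_one]
    rw [h1]
    have h2 : Complex.exp (ℓ z) * u z = N z := by rw [hℓe]; field_simp [hu0 z]
    rw [← h2]
    simp only [u]
    rw [Complex.ofReal_exp, ← Complex.exp_add, ← Complex.exp_add]
    congr 1
    conv_rhs => rw [← Complex.re_add_im (ℓ z)]
    push_cast; ring
  -- periodicity
  have huper : ∀ z, u (z + (2 * Real.pi : ℝ)) = u z := by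
    intro z
    simp only [u, Complex.add_re, Complex.ofReal_re]
    have : ((z.re + 2 * Real.pi : ℝ) : ℂ) * I = z.re * I + 2 * Real.pi * I := by push_cast; ring
    rw [this, Complex.exp_add, Complex.exp_two_pi_mul_I, mul_one]
  have him2 : ∀ z : ℂ, (z + (2 * Real.pi : ℝ)).im = z.im := fun z => by simp
  have hkper : ∀ z, k (z + (2 * Real.pi : ℝ)) = k z := fun z => by
    simp only [k, huper, him2]
  have hNper : ∀ z, N (z + (2 * Real.pi : ℝ)) = N z := fun z => by
    simp only [N, huper, hkper]
  have hℓper : ∀ z, ℓ (z + (2 * Real.pi : ℝ)) = ℓ z := by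
    intro z
    have h1 := clog_unique (S := (univ : Set ℂ)) isPreconnected_univ
      (L₁ := fun z => ℓ (z + (2 * Real.pi : ℝ))) (L₂ := ℓ) (by fun_prop) (by fun_prop)
      (fun z _ => by rw [hℓe, hℓe, hNper, huper]) (a := z) (b := 0) trivial trivial
    let B : ℂ → ℂ := fun z => 1 + b / a * Complex.exp (-(2 * z.re * I))
    have hBs : ∀ z, B z ∈ Complex.slitPlane := by
      intro z
      left
      have hn : ‖b / a * Complex.exp (-(2 * z.re * I))‖ < 1 := by
        rw [norm_mul, norm_div]
        have : -(2 * (z.re:ℂ) * I) = ((-(2 * z.re) : ℝ) : ℂ) * I := by push_cast; ring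
        rw [this, Complex.norm_exp_ofReal_mul_I, mul_one,
          div_lt_one (norm_pos_iff.2 ha0)]
        exact hab
      have h2 := (abs_lt.1 ((Complex.abs_re_le_norm _).trans_lt hn)).1
      simp only [B, Complex.add_re, Complex.one_re]
      linarith
    have hconv : Convex ℝ {z : ℂ | z.im = 0} :=
      convex_hyperplane (f := Complex.im) Complex.imLm.isLinear 0
    have h2 := clog_unique (S := {z : ℂ | z.im = 0}) hconv.isPreconnected
      (L₁ := ℓ) (L₂ := fun z => Complex.log (B z) + Complex.log a) (by fun_prop)
      ((ContinuousOn.clog (by fun_prop) (fun z _ => hBs z)).add continuousOn_const)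
      (fun z hz => by
        rw [hℓe, Complex.exp_add, Complex.exp_log (Complex.slitPlane_ne_zero (hBs z)),
          Complex.exp_log ha0, hNbot z (le_of_eq hz)]
        simp only [u, B, hsplit]
        field_simp) (a := 0 + (2 * Real.pi : ℝ)) (b := 0) (by simp) (by simp)
    have h3 : B (0 + (2 * Real.pi : ℝ)) = B 0 := by
      simp only [B]
      congr 2
      simp only [zero_add, Complex.ofReal_re, Complex.zero_re, Complex.ofReal_zero, mul_zero,
        zero_mul, neg_zero, Complex.exp_zero]
      have : -(2 * ((2 * Real.pi : ℝ) : ℂ) * I) = ((-2 : ℤ) : ℂ) * (2 * Real.pi * I) := by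
        push_cast; ring
      rw [this, Complex.exp_int_mul_two_pi_mul_I]
    simp only [h3] at h2
    linear_combination h1 + h2
  -- the lift
  let F : ℂ → ℂ := fun z => ((z.re + (ℓ z).im : ℝ) : ℂ) + ((‖f (k z)‖ ^ 2 + z.im - c z.im : ℝ) : ℂ) * I
  have hFre : ∀ z, (F z).re = z.re + (ℓ z).im := fun z => by
    simp only [F, Complex.add_re, Complex.ofReal_re, Complex.mul_re, Complex.I_re, Complex.ofReal_im,
      Complex.I_im, mul_zero, zero_mul, sub_zero, add_zero]
  have hFim : ∀ z, (F z).im = ‖f (k z)‖ ^ 2 + z.im - c z.im := fun z => by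
    simp only [F, Complex.add_im, Complex.ofReal_re, Complex.mul_im, Complex.I_re, Complex.ofReal_im,
      Complex.I_im, mul_zero, mul_one, zero_add, add_zero]
  have hFc : Continuous F := by
    have hfkc : Continuous (fun z => f (k z)) := hf.cont.comp_continuous hkc hkm
    have h1 : Continuous (fun z : ℂ => z.re + (ℓ z).im) :=
      Complex.continuous_re.add (Complex.continuous_im.comp hℓc)
    have h2 : Continuous (fun z : ℂ => ‖f (k z)‖ ^ 2 + z.im - c z.im) :=
      ((hfkc.norm.pow 2).add Complex.continuous_im).sub (hcc.comp Complex.continuous_im)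
    exact (Complex.continuous_ofReal.comp h1).add
      ((Complex.continuous_ofReal.comp h2).mul continuous_const)
  have hper : ∀ z, F (z + (2 * Real.pi : ℝ)) = F z + (2 * Real.pi : ℝ) := by
    intro z
    apply Complex.ext
    · simp only [hFre, hℓper, Complex.add_re, Complex.ofReal_re]; ring
    · rw [him2, hFim, hFim, hkper, him2]
  have htop : ∀ z : ℂ, 1 ≤ z.im → (F z).im = z.im := by
    intro z hz
    rw [hFim, hctop _ hz, hbd (k z) (by rw [hkn, hctop _ hz, Real.sqrt_one])]; ring
  have hbot : ∀ z : ℂ, z.im ≤ 0 → (F z).im = z.im := by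
    intro z hz
    rw [hFim, hfk, hcbot _ hz]; simp
  have hmid : ∀ z : ℂ, 0 < z.im → z.im < 1 → 0 < (F z).im ∧ (F z).im < 1 := by
    intro z h0 h1
    have hk : ‖k z‖ = Real.sqrt z.im := by rw [hkn, hcid _ h0.le h1.le]
    rw [hFim, hcid _ h0.le h1.le, add_sub_cancel_right]
    constructor
    · have : k z ≠ 0 := by rw [← norm_pos_iff, hk]; exact Real.sqrt_pos.2 h0
      have := hf.ne_zero (hkm z) this
      positivity
    · have : ‖f (k z)‖ < 1 := hinside _ (by
        rw [hk, Real.sqrt_lt' one_pos]; simpa using h1)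
      nlinarith [norm_nonneg (f (k z))]
  have hfpol : ∀ z, f (k z) = (‖f (k z)‖ : ℂ) * Complex.exp ((F z).re * I) := by
    intro z
    rw [hFre, hfk, norm_smul, Real.norm_eq_abs, abs_of_nonneg (Real.sqrt_nonneg _), real_smul]
    conv_lhs => rw [← hpolN z]
    push_cast; ring
  have huinj : ∀ z z', F z = F z' → u z = u z' → z.im = z'.im → z = z' := by
    intro z z' hF hu him
    obtain ⟨j, hj⟩ := Complex.exp_eq_exp_iff_exists_int.1 hu
    have hre : z.re = z'.re + j * (2 * Real.pi) := by
      have := congrArg Complex.im hj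
      simpa using this
    have hz : z = z' + (j * (2 * Real.pi) : ℝ) := by
      apply Complex.ext
      · simp [hre]
      · simp [him]
    have hP : Function.Periodic (fun z => F z - z) ((2 * Real.pi : ℝ) : ℂ) := by
      intro z
      simp only [hper z]; ring
    have := hP.int_mul j z'
    have e : z' + (j:ℂ) * ((2 * Real.pi : ℝ) : ℂ) = z := by rw [hz]; push_cast; ring
    rw [e] at this
    rw [hF] at this
    exact sub_right_injective this
  have hinj : Function.Injective F := by
    intro z z' hF
    rcases le_or_gt z.im 0 with h0 | h0
    · have h0' : z'.im ≤ 0 := by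
        by_contra hlt
        push Not at hlt
        have e := congrArg Complex.im hF
        rw [hbot z h0] at e
        rcases le_or_gt 1 z'.im with h1 | h1
        · rw [htop z' h1] at e; linarith
        · linarith [(hmid z' hlt h1).1]
      have him : z.im = z'.im := by rw [← hbot z h0, ← hbot z' h0', hF]
      refine huinj z z' hF ?_ him
      have p1 := hpolN z
      have p2 := hpolN z'
      rw [← hFre] at p1 p2
      rw [hF] at p1
      rw [hNbot z h0] at p1
      rw [hNbot z' h0'] at p2
      have e1 : A (‖A (u z')‖ • u z - ‖A (u z)‖ • u z') = 0 := by
        rw [map_sub, map_smul, map_smul, real_smul, real_smul]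
        linear_combination -(‖A (u z')‖ : ℂ) * p1 + (‖A (u z)‖ : ℂ) * p2
      have e2 := sub_eq_zero.1 (hAinj _ e1)
      have e3 := congrArg norm e2
      rw [norm_smul, norm_smul, hun, hun, mul_one, mul_one, norm_norm, norm_norm] at e3
      rw [e3] at e2
      have : ‖A (u z)‖ ≠ 0 := by rw [← hNbot z h0]; exact norm_ne_zero_iff.2 (hN0 z)
      exact smul_right_injective ℂ this e2
    · have h0' : 0 < z'.im := by
        by_contra hlt
        push Not at hlt
        have e := congrArg Complex.im hF
        rw [hbot z' hlt] at e
        rcases le_or_gt 1 z.im with h1 | h1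
        · rw [htop z h1] at e; linarith
        · linarith [(hmid z h0 h1).1]
      have hnn : ‖f (k z)‖ ^ 2 = ‖f (k z')‖ ^ 2 := by
        have e := congrArg Complex.im hF
        rcases le_or_gt 1 z.im with h1 | h1 <;> rcases le_or_gt 1 z'.im with h1' | h1'
        · rw [hbd (k z) (by rw [hkn, hctop _ h1, Real.sqrt_one]),
            hbd (k z') (by rw [hkn, hctop _ h1', Real.sqrt_one])]
        · rw [htop z h1] at e; linarith [(hmid z' h0' h1').2]
        · rw [htop z' h1'] at e; linarith [(hmid z h0 h1).2]
        · rw [hFim, hFim, hcid _ h0.le h1.le, hcid _ h0'.le h1'.le] at e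
          linarith
      have hn : ‖f (k z)‖ = ‖f (k z')‖ := by
        rwa [sq_eq_sq₀ (norm_nonneg _) (norm_nonneg _)] at hnn
      have hff : f (k z) = f (k z') := by
        rw [hfpol z, hfpol z', hn, hF]
      have hkk := hf.inj (hkm z) (hkm z') hff
      have hs : Real.sqrt (c z.im) = Real.sqrt (c z'.im) := by rw [← hkn, ← hkn, hkk]
      have hcc' : c z.im = c z'.im := by rwa [Real.sqrt_inj (hc0 _) (hc0 _)] at hs
      have him : z.im = z'.im := by
        have e := congrArg Complex.im hF
        rw [hFim, hFim, hcc', hn] at e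
        linarith
      refine huinj z z' hF ?_ him
      have hpos : 0 < c z.im := by
        simp only [c]; exact lt_max_of_lt_right (lt_min h0 one_pos)
      simp only [k] at hkk
      rw [← hs] at hkk
      exact smul_right_injective ℂ (Real.sqrt_pos.2 hpos).ne' hkk
  refine ⟨F, ⟨⟨hFc, hinj, hper, htop, hbot, hmid, ?_, ?_⟩, ?_⟩, ?_⟩
  · intro z hz
    rw [hFre, hFre]
    have : K z = K (z.re + I) := by
      simp only [K, hctop _ hz]; simp [hctop 1 le_rfl]
    simp [ℓ, ← this]
  · intro z hz
    rw [hFre, hFre]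
    have : K z = K z.re := by
      simp only [K, hcbot _ hz]; simp [hcbot 0 le_rfl]
    simp [ℓ, ← this]
  · intro z h0 h1
    have hk : pol z = k z := by simp only [pol, k, u, hcid _ h0.le h1]
    rw [hk, hfpol z, pol, hFim, hcid _ h0.le h1, add_sub_cancel_right,
      Real.sqrt_sq (norm_nonneg _), real_smul]
  · apply Complex.ext
    · rw [hFre, hℓx0]; simp
    · rw [hbot _ (by simp)]


theorem DiskMap.comp {g f : ℂ → ℂ} (hg : DiskMap g) (hf : DiskMap f) : DiskMap (g ∘ f) where
  cont := hg.cont.comp hf.cont hf.maps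
  maps := hg.maps.comp hf.maps
  inj := hg.inj.comp hf.inj hf.maps
  zero := by simp [hf.zero, hg.zero]
  vol := by
    intro E hE hm
    rw [image_comp, hg.vol _ ((image_mono hE).trans hf.maps.image_subset)
      (hm.image_of_continuousOn_injOn (hf.cont.mono hE) (hf.inj.mono hE)), hf.vol E hE hm]

theorem DiskMap.iterate {f : ℂ → ℂ} (hf : DiskMap f) (k : ℕ) : DiskMap (f^[k]) := by
  induction k with
  | zero => exact ⟨continuousOn_id, mapsTo_id _, injOn_id _, rfl, fun E _ _ => by simp⟩
  | succ k ih => rw [Function.iterate_succ']; exact hf.comp ih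

theorem StripMap.comp {F G : ℂ → ℂ} (hF : StripMap F) (hG : StripMap G) : StripMap (F ∘ G) where
  cont := hF.cont.comp hG.cont
  inj := hF.inj.comp hG.inj
  per := fun z => by simp only [Function.comp, hG.per, hF.per]
  top := fun z hz => by
    have := hG.top z hz
    simp only [Function.comp]
    rw [hF.top _ (by rw [this]; exact hz), this]
  bot := fun z hz => by
    have := hG.bot z hz
    simp only [Function.comp]
    rw [hF.bot _ (by rw [this]; exact hz), this]
  mid := fun z h0 h1 => hF.mid _ (hG.mid z h0 h1).1 (hG.mid z h0 h1).2
  topre := fun z hz => by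
    have := hG.top z hz
    have h2 := hG.top (z.re + I) (by simp)
    simp only [Function.comp]
    rw [hF.topre (G z) (by rw [this]; exact hz), hF.topre (G (z.re + I)) (by rw [h2]; simp),
      hG.topre z hz]
  botre := fun z hz => by
    have := hG.bot z hz
    have h2 := hG.bot z.re (by simp)
    simp only [Function.comp]
    rw [hF.botre (G z) (by rw [this]; exact hz), hF.botre (G z.re) (by rw [h2]; simp),
      hG.botre z hz]

theorem IsLift.comp {f g F G : ℂ → ℂ} (hF : IsLift f F) (hG : IsLift g G) :
    IsLift (f ∘ g) (F ∘ G) where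
  strip := hF.strip.comp hG.strip
  semi := fun z h0 h1 => by
    have h : 0 < (G z).im ∧ (G z).im ≤ 1 := by
      rcases h1.lt_or_eq with h | h
      · exact ⟨(hG.strip.mid z h0 h).1, (hG.strip.mid z h0 h).2.le⟩
      · rw [hG.strip.top z h.ge]; exact ⟨h0, h1⟩
    simp only [Function.comp]
    rw [hF.semi _ h.1 h.2, hG.semi z h0 h1]

theorem IsLift.iterate {f F : ℂ → ℂ} (hF : IsLift f F) (k : ℕ) : IsLift (f^[k]) (F^[k]) := by
  induction k with
  | zero =>
    refine ⟨⟨continuous_id, Function.injective_id, ?_, ?_, ?_, ?_, ?_, ?_⟩, ?_⟩ <;> simp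
    intro z h0 h1; exact ⟨h0, h1⟩
  | succ k ih =>
    rw [Function.iterate_succ', Function.iterate_succ']; exact hF.comp ih

theorem IsLift.shift {f F : ℂ → ℂ} (hF : IsLift f F) (t : ℝ) (ht : Complex.exp (t * I) = 1) :
    IsLift f (fun z => F z + t) where
  strip := by
    have h := hF.strip
    have hc := h.cont
    refine ⟨by fun_prop, ?_, ?_, ?_, ?_, ?_, ?_, ?_⟩
    · intro z w hzw
      exact h.inj (add_right_cancel hzw)
    · intro z; simp only [h.per]; ring
    · intro z hz; simp [h.top z hz]
    · intro z hz; simp [h.bot z hz]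
    · intro z h0 h1; simpa using h.mid z h0 h1
    · intro z hz; simp [h.topre z hz]
    · intro z hz; simp only [Complex.add_re, h.botre z hz]
  semi := fun z h0 h1 => by
    rw [← hF.semi z h0 h1]
    simp only [pol, Complex.add_im, Complex.ofReal_im, add_zero, Complex.add_re, Complex.ofReal_re]
    rw [Complex.ofReal_add, add_mul, Complex.exp_add, ht, mul_one]

/-- Continuous injective lifts of circle maps of degree one are increasing. -/
theorem circle_mono (g : ℝ → ℝ) (hc : Continuous g) (hi : Function.Injective g)
    (hp : g (0 + 2 * Real.pi) = g 0 + 2 * Real.pi) : StrictMono g := by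
  rcases hc.strictMono_of_inj hi with h | h
  · exact h
  · have h1 : g (0 + 2 * Real.pi) < g 0 := h (by linarith [Real.pi_pos])
    linarith [Real.pi_pos]

theorem StripMap.bottom_mono {F : ℂ → ℂ} (h : StripMap F) : StrictMono (fun x : ℝ => (F x).re) := by
  have hc := h.cont
  apply circle_mono _ (by fun_prop)
  · intro x y hxy
    have : F x = F y := by
      apply Complex.ext hxy
      rw [h.bot _ (by simp), h.bot _ (by simp)]; simp
    exact_mod_cast h.inj this
  · have := h.per ((0:ℝ) : ℂ)
    rw [← Complex.ofReal_add] at this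
    rw [this]; simp

theorem StripMap.top_mono {F : ℂ → ℂ} (h : StripMap F) :
    StrictMono (fun x : ℝ => (F (x + I)).re) := by
  have hc := h.cont
  apply circle_mono _ (by fun_prop)
  · intro x y hxy
    have : F (x + I) = F (y + I) := by
      apply Complex.ext hxy
      rw [h.top _ (by simp), h.top _ (by simp)]; simp
    have := add_right_cancel (h.inj this)
    exact_mod_cast this
  · have := h.per (((0:ℝ) : ℂ) + I)
    have e : (((0:ℝ) : ℂ) + I) + ((2 * Real.pi : ℝ) : ℂ) = ((0 + 2 * Real.pi : ℝ) : ℂ) + I := by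
      push_cast; ring
    rw [e] at this
    rw [this]; simp

/-- A boundary map with a fixed point moves points by less than a full turn. -/
theorem StripMap.bottom_small {F : ℂ → ℂ} (h : StripMap F) (x0 : ℝ) (hx0 : F x0 = x0) (x : ℝ) :
    |(F x).re - x| < 2 * Real.pi := by
  have hm := h.bottom_mono
  have hfix : ∀ j : ℤ, (F ((x0 + j * (2 * Real.pi) : ℝ) : ℂ)).re = x0 + j * (2 * Real.pi) := by
    intro j
    have := h.per_int x0 j
    rw [Complex.ofReal_add, this, hx0]; simp
  have hp : 0 < 2 * Real.pi := by positivity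
  obtain ⟨j, hj, -⟩ := existsUnique_add_zsmul_mem_Ico hp x x0
  rw [zsmul_eq_mul] at hj
  have h1 : x0 + (-j : ℤ) * (2 * Real.pi) ≤ x := by push_cast; linarith [hj.1]
  have h2 : x < x0 + (-j + 1 : ℤ) * (2 * Real.pi) := by push_cast; linarith [hj.2]
  have e1 := hm.monotone h1
  have e2 := hm h2
  simp only [hfix] at e1 e2
  push_cast at *
  rw [abs_lt]; constructor <;> linarith

theorem StripMap.iterate_top {F : ℂ → ℂ} (h : StripMap F) (k : ℕ) (x : ℝ) :
    F^[k] (x + I) = ((fun x : ℝ => (F (x + I)).re)^[k] x : ℝ) + I := by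
  induction k generalizing x with
  | zero => simp
  | succ k ih =>
    have : F (x + I) = ((F (x + I)).re : ℝ) + I := by
      apply Complex.ext
      · simp
      · rw [h.top _ (by simp)]; simp
    rw [Function.iterate_succ_apply, Function.iterate_succ_apply, this, ih]
    simp

/-- Orbits of an increasing map without fixed points are unbounded. -/
theorem iterate_unbounded (g : ℝ → ℝ) (hc : Continuous g) (hm : Monotone g)
    (hfix : ∀ x, g x ≠ x) (h0 : 0 < g 0) (M : ℝ) : ∃ k, M < g^[k] 0 := by
  by_contra hcon
  push Not at hcon
  have hmono : Monotone (fun n => g^[n] 0) := hm.monotone_iterate_of_le_map h0.le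
  have ht := tendsto_atTop_ciSup hmono ⟨M, by rintro _ ⟨n, rfl⟩; exact hcon n⟩
  exact hfix _ (isFixedPt_of_tendsto_iterate ht hc.continuousAt)

theorem no_positive_eigenvalue {f : ℂ → ℂ} (hf : DiskMap f)
    (hbd : ∀ z : ℂ, ‖z‖ = 1 → ‖f z‖ = 1) (hinside : ∀ z : ℂ, ‖z‖ < 1 → ‖f z‖ < 1)
    (A : ℂ →L[ℝ] ℂ) (hA : HasFDerivAt f A 0) (hdet : 0 < A.det)
    (hper : ∀ z ∈ closedBall (0:ℂ) 1, z ≠ 0 → ∀ n : ℕ, 1 ≤ n → f^[n] z ≠ z)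
    (v : ℂ) (hv : v ≠ 0) (r : ℝ) (hr : 0 < r) (hev : A v = r • v) : False := by
  have hvn : ‖v‖ ≠ 0 := norm_ne_zero_iff.2 hv
  have hev' : A (Complex.exp (Complex.arg v * I)) = r * Complex.exp (Complex.arg v * I) := by
    have e : Complex.exp (Complex.arg v * I) = (‖v‖⁻¹ : ℝ) • v := by
      conv_rhs => rw [← Complex.norm_mul_exp_arg_mul_I v]
      rw [Complex.norm_mul_exp_arg_mul_I v, Complex.real_smul, Complex.ofReal_inv]
      have : (‖v‖ : ℂ) ≠ 0 := by exact_mod_cast hvn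
      field_simp
      rw [mul_comm]; exact Complex.norm_mul_exp_arg_mul_I v
    rw [e, map_smul, hev]
    simp only [Complex.real_smul]; ring
  obtain ⟨F, hF, hx0⟩ := exists_lift hf hbd hinside A hA hdet (Complex.arg v) r hr hev'
  set x0 := Complex.arg v
  have hFc := hF.strip.cont
  let g : ℝ → ℝ := fun x => (F (x + I)).re
  have hgc : Continuous g := by fun_prop
  have hgm : StrictMono g := hF.strip.top_mono
  have hgfix : ∀ x, g x ≠ x := by
    intro x hx
    have h1 : F (x + I) = x + I := by
      apply Complex.ext
      · simpa using hx
      · rw [hF.strip.top _ (by simp)]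
    have h2 := hF.semi (x + I) (by simp) (by simp)
    rw [h1] at h2
    exact hper (pol (x + I)) (pol_mem (by simp) (by simp)) (pol_ne (by simp)) 1 le_rfl h2.symm
  have hFk : ∀ k, F^[k] x0 = x0 := fun k => Function.iterate_fixed hx0 k
  have key : ∀ (k : ℕ) (t : ℝ), 1 ≤ k → |t| = 2 * Real.pi →
      ¬ (t < 0 ∧ 0 < g^[k] 0 + t) ∧ ¬ (0 < t ∧ g^[k] 0 + t < 0) := by
    intro k t hk ht
    have hexp : Complex.exp (t * I) = 1 := by
      rcases (abs_eq (by positivity)).1 ht with h | h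
      · rw [h]; push_cast; exact Complex.exp_two_pi_mul_I
      · rw [h]; push_cast; rw [neg_mul, Complex.exp_neg, Complex.exp_two_pi_mul_I, inv_one]
    have hFkl := hF.iterate k
    have hH := hFkl.shift t hexp
    have hfk := hf.iterate k
    have := poincare_birkhoff hH.strip (by
      intro z h0 h1 hz
      rcases h0.lt_or_eq with h0 | h0
      · have h2 := hH.semi z h0 h1
        rw [hz] at h2
        exact hper (pol z) (pol_mem h0.le h1) (pol_ne h0) k hk h2.symm
      · have hzr : z = (z.re : ℂ) := by
          apply Complex.ext
          · simp
          · simp [← h0]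
        have h3 := hFkl.strip.bottom_small x0 (hFk k) z.re
        rw [← hzr] at h3
        have h4 := congrArg Complex.re hz
        simp only [Complex.add_re, Complex.ofReal_re] at h4
        have : (F^[k] z).re - z.re = -t := by linarith
        rw [this, abs_neg, ht] at h3
        exact lt_irrefl _ h3)
      (fun ε h0 h1 => escape_up hfk hH ε h0 h1) (fun ε h0 h1 => escape_down hfk hH ε h0 h1) x0 0
    have e1 : (F^[k] (x0:ℂ) + t - x0).re = t := by rw [hFk]; simp
    have e2 : (F^[k] ((0:ℝ) + I) + t - ((0:ℝ) + I)).re = g^[k] 0 + t := by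
      rw [hF.strip.iterate_top]; simp [g]
    rw [e1, e2] at this
    exact this
  rcases lt_or_gt_of_ne (hgfix 0) with h | h
  · obtain ⟨k, hk⟩ := iterate_unbounded (fun x => -g (-x)) (by fun_prop)
      (fun x y hxy => neg_le_neg (hgm.monotone (neg_le_neg hxy)))
      (fun x hx => hgfix (-x) (by linarith)) (by simpa using h) (2 * Real.pi)
    have hc : ∀ k x, (fun x => -g (-x))^[k] x = -(g^[k] (-x)) := by
      intro k
      induction k with
      | zero => simp
      | succ k ih => intro x; rw [Function.iterate_succ_apply, ih, Function.iterate_succ_apply]; simp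
    rw [hc, neg_zero] at hk
    have hk1 : 1 ≤ k := by
      rcases Nat.eq_zero_or_pos k with rfl | h
      · simp at hk; linarith [Real.pi_pos]
      · exact h
    exact (key k (2 * Real.pi) hk1 (abs_of_pos (by positivity))).2
      ⟨by positivity, by linarith⟩
  · obtain ⟨k, hk⟩ := iterate_unbounded g hgc hgm.monotone hgfix h (2 * Real.pi)
    have hk1 : 1 ≤ k := by
      rcases Nat.eq_zero_or_pos k with rfl | h
      · simp at hk; linarith [Real.pi_pos]
      · exact h
    exact (key k (-(2 * Real.pi)) hk1 (by rw [abs_neg]; exact abs_of_pos (by positivity))).1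
      ⟨by linarith [Real.pi_pos], by linarith⟩


theorem clm_det_mul (A B : ℂ →L[ℝ] ℂ) : (A.comp B).det = A.det * B.det :=
  LinearMap.det_comp (A : ℂ →ₗ[ℝ] ℂ) (B : ℂ →ₗ[ℝ] ℂ)

theorem clm_det_id : (ContinuousLinearMap.id ℝ ℂ).det = 1 :=
  LinearMap.det_id

theorem interior_map {g : ℂ → ℂ} (hs : ContDiffOn ℝ (⊤ : ℕ∞) g Disk) (hm : MapsTo g Disk Disk)
    (hd : ∀ z ∈ Disk, (fderivWithin ℝ g Disk z).det ≠ 0) (z : ℂ) (hz : ‖z‖ < 1) : ‖g z‖ < 1 := by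
  have hn : Disk ∈ nhds z := by
    apply Filter.mem_of_superset (isOpen_ball.mem_nhds (mem_ball_zero_iff.2 hz)) ball_subset_closedBall
  have hzD : z ∈ Disk := mem_of_mem_nhds hn
  have hst := (hs.contDiffAt hn).hasStrictFDerivAt (by simp)
  have hdet : (fderiv ℝ g z).det ≠ 0 := by
    rw [← fderivWithin_of_mem_nhds hn]; exact hd z hzD
  have hsurj : (fderiv ℝ g z).range = ⊤ := by
    apply LinearMap.range_eq_top.2
    exact (LinearMap.equivOfDetNeZero (fderiv ℝ g z : ℂ →ₗ[ℝ] ℂ) hdet).surjective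
  have hmap := hst.map_nhds_eq_of_surj hsurj
  have h1 : Disk ∈ nhds (g z) := by
    rw [← hmap]
    exact Filter.mem_map.2 (Filter.mem_of_superset hn hm)
  have h2 : g z ∈ interior Disk := mem_interior_iff_mem_nhds.2 h1
  rw [Disk, interior_closedBall _ one_ne_zero] at h2
  exact mem_ball_zero_iff.1 h2

theorem disk_uniqueDiff : UniqueDiffOn ℝ Disk := by
  refine uniqueDiffOn_convex (convex_closedBall (0:ℂ) 1) ?_
  rw [Disk, interior_closedBall _ one_ne_zero]
  exact ⟨0, by simp⟩

theorem nondegeneracy_of_pseudorotation (φ : SmoothDiskDiffeo)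
    (harea : ∀ z ∈ Disk, (fderivWithin ℝ φ.toFun Disk z).det = 1)
    (hfix : φ.toFun 0 = 0)
    (hper : ∀ z ∈ Disk, z ≠ 0 → ∀ n : ℕ, 1 ≤ n → φ.toFun^[n] z ≠ z) :
    (∀ n : ℕ, 1 ≤ n →
      ¬ Module.End.HasEigenvalue
          (fderivWithin ℝ (φ.toFun^[n]) Disk 0 : ℂ →ₗ[ℝ] ℂ) 1) ∧
    (∀ r : ℝ,
      ¬ Module.End.HasEigenvalue
          (fderivWithin ℝ φ.toFun Disk 0 : ℂ →ₗ[ℝ] ℂ) r) := by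
  have hdiff : ∀ z ∈ Disk, HasFDerivWithinAt φ.toFun (fderivWithin ℝ φ.toFun Disk z) Disk z :=
    fun z hz => ((φ.smooth.differentiableOn (by simp)) z hz).hasFDerivWithinAt
  have hinj : InjOn φ.toFun Disk := fun z hz w hw h => by
    rw [← φ.left_inv z hz, ← φ.left_inv w hw, h]
  have hD : DiskMap φ.toFun := by
    refine ⟨φ.smooth.continuousOn, φ.mapsTo, hinj, hfix, ?_⟩
    intro E hE hm
    rw [← MeasureTheory.lintegral_abs_det_fderiv_eq_addHaar_image MeasureTheory.volume hm
      (fun z hz => (hdiff z (hE hz)).mono hE) (hinj.mono hE)]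
    rw [MeasureTheory.setLIntegral_congr_fun (g := fun _ => 1) hm (fun z hz => by
      simp only [harea z (hE hz)]; simp)]
    simp
  have hinside : ∀ z : ℂ, ‖z‖ < 1 → ‖φ.toFun z‖ < 1 := interior_map φ.smooth φ.mapsTo
    (fun z hz => by rw [harea z hz]; exact one_ne_zero)
  have hinside' : ∀ z : ℂ, ‖z‖ < 1 → ‖φ.invFun z‖ < 1 := by
    apply interior_map φ.smooth_inv φ.mapsTo_inv
    intro z hz h0
    have hi : HasFDerivWithinAt φ.invFun (fderivWithin ℝ φ.invFun Disk z) Disk z :=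
      ((φ.smooth_inv.differentiableOn (by simp)) z hz).hasFDerivWithinAt
    have hc := (hdiff _ (φ.mapsTo_inv hz)).comp z hi φ.mapsTo_inv
    have hid : HasFDerivWithinAt (φ.toFun ∘ φ.invFun) (ContinuousLinearMap.id ℝ ℂ) Disk z :=
      (hasFDerivWithinAt_id z Disk).congr (fun w hw => φ.right_inv w hw) (φ.right_inv z hz)
    have he := (disk_uniqueDiff z hz).eq hc hid
    have := congrArg ContinuousLinearMap.det he
    rw [clm_det_mul, h0, clm_det_id, mul_zero] at this
    exact zero_ne_one this
  have hbd : ∀ z : ℂ, ‖z‖ = 1 → ‖φ.toFun z‖ = 1 := by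
    intro z hz
    have hzD : z ∈ Disk := mem_closedBall_zero_iff.2 hz.le
    apply le_antisymm (mem_closedBall_zero_iff.1 (φ.mapsTo hzD))
    by_contra hlt
    push Not at hlt
    have := hinside' _ hlt
    rw [φ.left_inv z hzD, hz] at this
    exact lt_irrefl _ this
  have hn0 : Disk ∈ nhds (0:ℂ) := closedBall_mem_nhds _ one_pos
  have h0D : (0:ℂ) ∈ Disk := mem_of_mem_nhds hn0
  set A := fderivWithin ℝ φ.toFun Disk 0 with hAdef
  have hA : HasFDerivAt φ.toFun A 0 := (hdiff 0 h0D).hasFDerivAt hn0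
  have hAdet : A.det = 1 := harea 0 h0D
  have hAn : ∀ n, HasFDerivAt (φ.toFun^[n]) (A ^ n) 0 := fun n => hA.iterate hfix n
  have hAndet : ∀ n, (A ^ n).det = 1 := by
    intro n
    induction n with
    | zero => exact clm_det_id
    | succ n ih =>
      rw [pow_succ]
      exact (clm_det_mul _ _).trans (by rw [ih, hAdet, mul_one])
  have hbdn : ∀ n (z : ℂ), ‖z‖ = 1 → ‖φ.toFun^[n] z‖ = 1 := by
    intro n
    induction n with
    | zero => intro z hz; exact hz
    | succ n ih => intro z hz; rw [Function.iterate_succ_apply]; exact ih _ (hbd z hz)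
  have hintn : ∀ n (z : ℂ), ‖z‖ < 1 → ‖φ.toFun^[n] z‖ < 1 := by
    intro n
    induction n with
    | zero => intro z hz; exact hz
    | succ n ih => intro z hz; rw [Function.iterate_succ_apply]; exact ih _ (hinside z hz)
  have main : ∀ n, 1 ≤ n → ∀ v : ℂ, v ≠ 0 → ∀ r : ℝ, 0 < r → (A ^ n) v = r • v → False := by
    intro n hn v hv r hr hev
    refine no_positive_eigenvalue (hD.iterate n) (hbdn n) (hintn n) (A ^ n) (hAn n)
      (by rw [hAndet]; exact one_pos) ?_ v hv r hr hev
    intro z hz h0 m hm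
    rw [← Function.iterate_mul]
    exact hper z hz h0 (n * m) (Nat.mul_pos hn hm)
  constructor
  · intro n hn he
    obtain ⟨v, hv⟩ := he.exists_hasEigenvector
    have h1 := hv.apply_eq_smul
    have h2 : fderivWithin ℝ (φ.toFun^[n]) Disk 0 = A ^ n := by
      rw [fderivWithin_of_mem_nhds hn0]; exact (hAn n).fderiv
    rw [h2] at h1
    exact main n hn v hv.2 1 one_pos h1
  · intro r he
    obtain ⟨v, hv⟩ := he.exists_hasEigenvector
    have h1 : A v = r • v := hv.apply_eq_smul
    have hr : r ≠ 0 := by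
      rintro rfl
      have hi := (LinearMap.equivOfDetNeZero (A : ℂ →ₗ[ℝ] ℂ)
        (show A.det ≠ 0 by rw [hAdet]; exact one_ne_zero)).injective
      exact hv.2 (hi (h1.trans (by rw [zero_smul]; exact (map_zero A).symm)))
    refine main 2 (by norm_num) v hv.2 (r ^ 2) (by positivity) ?_
    have : (A ^ 2) v = A (A v) := by rw [pow_two]; rfl
    rw [this, h1, map_smul, h1, smul_smul, pow_two]
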